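/- Let R be a complete Noetherian local Cohen–Macaulay normal domain such that every rank-one reflexive R-module whose class in Cl(R) is a torsion element is a maximal Cohen–Macaulay R-module. Suppose M = ⊕_{i=0}^n M_i is a basic R-module giving a semi-steady splitting NCCR of R that is not steady. Then Cl(R) is isomorphic as an abelian group to ℤ × A, where A is the torsion subgroup of Cl(R), and the order of A equals (n+1)/2. -/

import Mathlib

/-!
Let `X ⊆ Cl(R)` be the set of the `n + 1` classes `xᵢ = [M i]`.

For divisorial modules, `Hom(M i, M j)` is divisorial of class `xⱼ - xᵢ`, and divisorial modules
over a normal local domain have local endomorphism ring `R`, so a divisorial summand of a sum of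
divisorial modules is one of them (`exists_equiv_of_summand`). Hence semi-steadiness says that
`0 ∈ X` and that `X - x ⊆ X` or `x - X ⊆ X` for each `x ∈ X`. The module is steady as soon as
`X - x ⊆ X` for all `x ∈ X`, so this fails for some `x₁ ∈ X`. A counting argument then shows that
`X` is the disjoint union of `H` and `x₁ + H`, with `H` the stabilizer of `X`
(`structure_of_symmetric_subset`).

Two homological facts about `Λ = End(M)` finish the proof. Let `e ∈ Λ` be the projection onto a
summand `R` of `M`; then `e Hom(N, M) = N^*` for every `N`.

* `X` generates `Cl(R)` (`mem_of_nonsingularOrder`). Torsion-free modules have a determinant class in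
  `Cl(R)`, additive on short exact sequences. For `N` divisorial, `Hom(N, M)` has a finite resolution
  by projective `Λ`-modules, and `e` turns each projective into a sum of modules `(M i)^*`.
* If `Cl(R)` is a torsion group, then `X = Cl(R)` (`exists_cl_eq_of_isMCM`). All divisorial modules are
  then maximal Cohen–Macaulay, so each `Hom(N, M)` is a maximal Cohen–Macaulay `Λ`-module. Since
  `gl.dim Λ = dim R`, it is projective (`projective_of_subsingleton_ext`), and `N^*` is a summand of a
  sum of modules `(M i)^*`.

By the first fact `Cl(R) = H + ℤ x₁`. If `x₁` had finite order, `Cl(R)` would be finite, so `X = Cl(R)`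
by the second, which contradicts the choice of `x₁`. Therefore `Cl(R) = H ⊕ ℤ x₁` and the torsion
subgroup is `H`, of order `(n + 1) / 2`.
-/

/- ## Preliminary definitions -/

open Module TensorProduct CategoryTheory

universe u

section Defs

variable (R : Type u) [CommRing R]

/-- `N ∈ add_R M` : `N` is isomorphic to a direct summand of a finite direct sum of
copies of `M`. -/
def MemAdd (M N : Type u) [AddCommGroup M] [Module R M] [AddCommGroup N] [Module R N] : Prop :=
  ∃ (k : ℕ) (P : ModuleCat.{u} R), Nonempty ((N × P) ≃ₗ[R] (Fin k → M))

/-- `M` is a generator, i.e. `R ∈ add_R M`. -/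
def IsGeneratorModule (M : Type u) [AddCommGroup M] [Module R M] : Prop := MemAdd R M R

/-- `M` is an indecomposable module: it is nonzero and admits no nontrivial
direct sum decomposition. -/
def IsIndecomposableModule (M : Type u) [AddCommGroup M] [Module R M] : Prop :=
  Nontrivial M ∧ ∀ A B : Submodule R M, IsCompl A B → A = ⊥ ∨ B = ⊥

/-- `M` is steady : `M` is a generator and `End_R(M) ∈ add_R M`. -/
def IsSteadyModule (M : Type u) [AddCommGroup M] [Module R M] : Prop :=
  IsGeneratorModule R M ∧ MemAdd R M (Module.End R M)

/-- The family `(M i)` (the indecomposable decomposition of `M = ⊕ i, M i`) is semi-steady: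
`M` is a generator and, for each `i`, `Hom_R(M i, M) ∈ add_R M` or
`Hom_R(M i, M) ∈ add_R M^*`. -/
def IsSemiSteadyFamily {m : ℕ} (M : Fin m → Type u) [∀ i, AddCommGroup (M i)]
    [∀ i, Module R (M i)] : Prop :=
  IsGeneratorModule R (∀ j, M j) ∧
  ∀ i, MemAdd R (∀ j, M j) (M i →ₗ[R] ∀ j, M j) ∨
       MemAdd R (Module.Dual R (∀ j, M j)) (M i →ₗ[R] ∀ j, M j)

/-- `M` has rank one: after tensoring with the fraction field of `R`, it becomes
one-dimensional. -/
def HasRankOne (M : Type u) [AddCommGroup M] [Module R M] : Prop :=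
  Module.finrank (FractionRing R) (FractionRing R ⊗[R] M) = 1

/-- A divisorial module: a finitely generated rank-one reflexive module. -/
def IsDivisorialModule (M : Type u) [AddCommGroup M] [Module R M] : Prop :=
  Module.Finite R M ∧ Module.IsReflexive R M ∧ HasRankOne R M

/-- The depth of a module over a (local) ring, defined as
`inf { i | Ext^i_R(R/m, M) ≠ 0 }`. -/
noncomputable def moduleDepth (hR : IsLocalRing R) (M : Type u) [AddCommGroup M]
    [Module R M] : ℕ∞ :=
  letI := hR
  sInf {i : ℕ∞ | ∃ k : ℕ, i = (k : ℕ∞) ∧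
    ¬ Subsingleton ↥(((Ext R (ModuleCat.{u} R) k).obj
        (Opposite.op (ModuleCat.of R (IsLocalRing.ResidueField R)))).obj (ModuleCat.of R M))}

/-- `M` is a maximal Cohen-Macaulay module over the local ring `R`:
its depth equals (i.e. is at least) the Krull dimension of `R`. -/
def IsMCM (M : Type u) [AddCommGroup M] [Module R M] : Prop :=
  ∀ hR : IsLocalRing R, ringKrullDim R ≤ (moduleDepth R hR M : WithBot ℕ∞)

end Defs

section GlobalDim

variable (Λ : Type u) [Ring Λ]

/-- The global dimension of the ring `Λ` is at most `d`, expressed via vanishing of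
`Ext^{d+1}` on the category of `Λ`-modules. -/
def GlobalDimLE (d : ℕ) : Prop :=
  ∀ M N : ModuleCat.{u} Λ,
    Subsingleton ↥(((Ext ℤ (ModuleCat.{u} Λ) (d + 1)).obj (Opposite.op M)).obj N)

/-- The global dimension of the ring `Λ`. -/
noncomputable def globalDim : ℕ∞ :=
  sInf {d : ℕ∞ | ∃ k : ℕ, d = (k : ℕ∞) ∧ GlobalDimLE Λ k}

end GlobalDim

section Order

variable (R : Type u) [CommRing R]

/-- `Λ` is a non-singular `R`-order: `Λ` is a module-finite `R`-algebra which is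
maximal Cohen-Macaulay as an `R`-module, and `gl.dim Λ_p = dim R_p` for every
prime `p` of `R`. -/
def IsNonsingularOrder (Λ : Type u) [Ring Λ] [Algebra R Λ] : Prop :=
  Module.Finite R Λ ∧ IsMCM R Λ ∧
  ∀ p : PrimeSpectrum R,
    (globalDim (Localization.AtPrime p.asIdeal ⊗[R] Λ) : WithBot ℕ∞) =
      ringKrullDim (Localization.AtPrime p.asIdeal)

/-- The nonzero finitely generated reflexive module `M` gives a non-commutative crepant
resolution (NCCR) of `R`, i.e. `End_R(M)` is a non-singular `R`-order. -/
def GivesNCCR (M : Type u) [AddCommGroup M] [Module R M] : Prop :=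
  Module.Finite R M ∧ Module.IsReflexive R M ∧ Nontrivial M ∧
  IsNonsingularOrder R (Module.End R M)

end Order

section ClassGroup

variable (R : Type u) [CommRing R] [IsDomain R]

/-- Data exhibiting the abelian group `Cl` as the divisor class group of the normal
domain `R`: `cl` assigns to each divisorial (rank-one reflexive) module its class,
two divisorial modules have the same class iff they are isomorphic, every class comes
from a divisorial module, the class of `R` is zero, and the class of the divisorial
product `(M ⊗ N)^{**}` is the sum of the classes. -/
structure DivisorClassGroupData (Cl : Type u) [AddCommGroup Cl] where
  cl : ModuleCat.{u} R → Cl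
  cl_surjective : ∀ c : Cl, ∃ M : ModuleCat.{u} R, IsDivisorialModule R ↥M ∧ cl M = c
  cl_eq_iff : ∀ M N : ModuleCat.{u} R, IsDivisorialModule R ↥M → IsDivisorialModule R ↥N →
    (cl M = cl N ↔ Nonempty (↥M ≃ₗ[R] ↥N))
  cl_ring : cl (ModuleCat.of R R) = 0
  cl_add : ∀ M N : ModuleCat.{u} R, IsDivisorialModule R ↥M → IsDivisorialModule R ↥N →
    cl M + cl N = cl (ModuleCat.of R (Module.Dual R (Module.Dual R (↥M ⊗[R] ↥N))))

end ClassGroup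

set_option linter.unusedSectionVars false
set_option linter.unnecessarySimpa false

/-! ### Divisorial submodules of the fraction field -/

section Ideals

variable {R : Type u} [CommRing R] [IsDomain R]
variable {K : Type u} [Field K] [Algebra R K] [IsFractionRing R K]

/-- A nonzero fractional ideal, encoded as a nonzero submodule of `K` contained in a cyclic one. -/
structure IsFracIdeal (I : Submodule R K) : Prop where
  ne_bot : I ≠ ⊥
  le_span : ∃ u : K, I ≤ R ∙ u

/-- The inverse `(R : I)` of a fractional ideal. -/
def idealDual (I : Submodule R K) : Submodule R K := 1 / I

lemma mem_idealDual {I : Submodule R K} {x : K} :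
    x ∈ idealDual I ↔ ∀ y ∈ I, x * y ∈ (1 : Submodule R K) :=
  Submodule.mem_div_iff_forall_mul_mem

lemma idealDual_anti {I J : Submodule R K} (h : I ≤ J) : idealDual J ≤ idealDual I :=
  fun _ hx => mem_idealDual.2 fun y hy => mem_idealDual.1 hx y (h hy)

lemma le_idealDual_idealDual (I : Submodule R K) : I ≤ idealDual (idealDual I) :=
  fun x hx => mem_idealDual.2 fun y hy => by rw [mul_comm]; exact mem_idealDual.1 hy x hx

lemma idealDual_triple (I : Submodule R K) : idealDual (idealDual (idealDual I)) = idealDual I :=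
  le_antisymm (idealDual_anti (le_idealDual_idealDual I)) (le_idealDual_idealDual _)

lemma div_mul_eq (I J L : Submodule R K) : I / (J * L) = (I / J) / L := by
  apply le_antisymm
  · rw [Submodule.le_div_iff]
    intro x hx z hz
    rw [Submodule.mem_div_iff_forall_mul_mem] at hx ⊢
    intro y hy
    have := hx _ (Submodule.mul_mem_mul hy hz)
    rwa [mul_assoc, mul_comm z y]
  · rw [Submodule.le_div_iff_mul_le, mul_comm J L, ← mul_assoc]
    exact (mul_le_mul' (Submodule.le_div_iff_mul_le.1 le_rfl) le_rfl).trans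
      (Submodule.le_div_iff_mul_le.1 le_rfl)

lemma idealDual_mul (I J : Submodule R K) : idealDual (I * J) = idealDual I / J :=
  div_mul_eq _ _ _

lemma idealDual_mul_congr {I I' : Submodule R K} (h : idealDual I = idealDual I')
    (J : Submodule R K) : idealDual (I * J) = idealDual (I' * J) := by
  rw [idealDual_mul, idealDual_mul, h]

lemma idealDual_one : idealDual (1 : Submodule R K) = 1 := by
  ext x
  rw [mem_idealDual]
  constructor
  · intro h; simpa using h 1 (Submodule.one_le.1 le_rfl)
  · intro h y hy
    simpa using Submodule.mul_mem_mul h hy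

lemma IsFracIdeal.one : IsFracIdeal (1 : Submodule R K) :=
  ⟨fun h => one_ne_zero (α := K)
    ((Submodule.mem_bot R).1 (h ▸ (Submodule.one_le.1 le_rfl))), 1, by rw [Submodule.one_eq_span]⟩

lemma IsFracIdeal.exists_ne {I : Submodule R K} (h : IsFracIdeal I) : ∃ a ∈ I, a ≠ 0 :=
  (Submodule.ne_bot_iff _).1 h.ne_bot

lemma IsFracIdeal.mul {I J : Submodule R K} (hI : IsFracIdeal I) (hJ : IsFracIdeal J) :
    IsFracIdeal (I * J) := by
  obtain ⟨a, ha, ha0⟩ := hI.exists_ne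
  obtain ⟨b, hb, hb0⟩ := hJ.exists_ne
  obtain ⟨u, hu⟩ := hI.le_span
  obtain ⟨v, hv⟩ := hJ.le_span
  refine ⟨(Submodule.ne_bot_iff _).2 ⟨a * b, Submodule.mul_mem_mul ha hb, mul_ne_zero ha0 hb0⟩,
    u * v, (mul_le_mul' hu hv).trans ?_⟩
  rw [Submodule.span_mul_span, Set.singleton_mul_singleton]

lemma IsFracIdeal.div {I J : Submodule R K} (hI : IsFracIdeal I) (hJ : IsFracIdeal J) :
    IsFracIdeal (I / J) := by
  obtain ⟨a, ha, ha0⟩ := hI.exists_ne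
  obtain ⟨b, hb, hb0⟩ := hJ.exists_ne
  obtain ⟨u, hu⟩ := hI.le_span
  obtain ⟨v, hv⟩ := hJ.le_span
  have hv0 : v ≠ 0 := by
    rintro rfl
    have := hv hb
    simp at this
    exact hb0 this
  refine ⟨(Submodule.ne_bot_iff _).2 ⟨a * v⁻¹, ?_, mul_ne_zero ha0 (inv_ne_zero hv0)⟩,
    u * b⁻¹, ?_⟩
  · rw [Submodule.mem_div_iff_forall_mul_mem]
    intro y hy
    obtain ⟨r, rfl⟩ := Submodule.mem_span_singleton.1 (hv hy)
    have : a * v⁻¹ * r • v = r • a := by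
      rw [Algebra.smul_def, Algebra.smul_def]; field_simp
    rw [this]
    exact I.smul_mem r ha
  · intro x hx
    obtain ⟨r, hr⟩ := Submodule.mem_span_singleton.1
      (hu (Submodule.mem_div_iff_forall_mul_mem.1 hx b hb))
    refine Submodule.mem_span_singleton.2 ⟨r, ?_⟩
    rw [← smul_mul_assoc, hr, mul_assoc, mul_inv_cancel₀ hb0, mul_one]

lemma IsFracIdeal.dual {I : Submodule R K} (hI : IsFracIdeal I) : IsFracIdeal (idealDual I) :=
  IsFracIdeal.one.div hI

lemma IsFracIdeal.fg [IsNoetherianRing R] {I : Submodule R K} (hI : IsFracIdeal I) : I.FG := by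
  obtain ⟨u, hu⟩ := hI.le_span
  have : IsNoetherian R (R ∙ u) := isNoetherian_of_fg_of_noetherian _ (Submodule.fg_span_singleton u)
  have h2 : IsNoetherian R I := isNoetherian_of_le hu
  exact (Submodule.fg_top I).1 (h2.noetherian ⊤)

lemma IsFracIdeal.of_fg {I : Submodule R K} (h0 : I ≠ ⊥) (hI : I.FG) : IsFracIdeal I := by
  refine ⟨h0, ?_⟩
  obtain ⟨s, hs⟩ := hI
  obtain ⟨b, hb⟩ := IsLocalization.exist_integer_multiples_of_finset (nonZeroDivisors R) s
  have hb0 : algebraMap R K b ≠ 0 := by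
    simpa using nonZeroDivisors.ne_zero b.2
  refine ⟨(algebraMap R K b)⁻¹, ?_⟩
  rw [← hs, Submodule.span_le]
  intro a ha
  obtain ⟨r, hr⟩ := hb a ha
  refine Submodule.mem_span_singleton.2 ⟨r, ?_⟩
  rw [Algebra.smul_def, hr, Algebra.smul_def, mul_comm, ← mul_assoc, inv_mul_cancel₀ hb0, one_mul]

/-- A fractional ideal of a normal Noetherian domain has no multipliers outside `R`, since
multipliers of a finitely generated module are integral. -/
lemma div_self_eq_one [IsNoetherianRing R] [IsIntegrallyClosed R] {I : Submodule R K}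
    (hI : IsFracIdeal I) : I / I = 1 := by
  apply le_antisymm
  · intro x hx
    rw [Submodule.mem_div_iff_forall_mul_mem] at hx
    have : IsIntegral R x := isIntegral_of_smul_mem_submodule I hI.ne_bot hI.fg x hx
    obtain ⟨y, hy⟩ := IsIntegrallyClosed.isIntegral_iff.1 this
    exact Submodule.mem_one.2 ⟨y, hy⟩
  · rw [Submodule.le_div_iff_mul_le, one_mul]

/-- Divisorial ideals are invertible up to divisorial closure: `R : I (R : I) = R`. -/
lemma idealDual_mul_self [IsNoetherianRing R] [IsIntegrallyClosed R] {I : Submodule R K}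
    (hI : IsFracIdeal I) : idealDual (I * idealDual I) = 1 := by
  rw [idealDual_mul, div_self_eq_one hI.dual]

/-- Multiplication by elements of `(J : I)` as linear maps `I → J`. -/
def divToHom (I J : Submodule R K) : ↥(J / I) →ₗ[R] (I →ₗ[R] J) where
  toFun c :=
    { toFun := fun x => ⟨c.1 * x.1, Submodule.mem_div_iff_forall_mul_mem.1 c.2 _ x.2⟩
      map_add' := fun x y => Subtype.ext (mul_add _ _ _)
      map_smul' := fun r x => Subtype.ext (mul_smul_comm _ _ _) }
  map_add' c d := by ext x; exact add_mul _ _ _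
  map_smul' r c := by ext x; exact smul_mul_assoc _ _ _

@[simp] lemma divToHom_apply (I J : Submodule R K) (c : ↥(J / I)) (x : I) :
    ((divToHom I J c x : J) : K) = c.1 * x.1 := rfl

/-- An `R`-linear map between fractional ideals is multiplication by an element of `K`. -/
lemma exists_mul_of_linearMap {I : Submodule R K} (hI : I ≠ ⊥) (f : I →ₗ[R] K) :
    ∃ c : K, ∀ x : I, f x = c * x.1 := by
  obtain ⟨a, ha, ha0⟩ := (Submodule.ne_bot_iff _).1 hI
  refine ⟨f ⟨a, ha⟩ / a, fun x => ?_⟩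
  obtain ⟨r, s, hs, hrs⟩ := IsFractionRing.div_surjective (A := R) (x.1 / a)
  have hs0 : algebraMap R K s ≠ 0 := by simpa using nonZeroDivisors.ne_zero hs
  have h1 : algebraMap R K s * x.1 = algebraMap R K r * a := by
    field_simp at hrs; linear_combination -hrs
  have h2 : s • x = r • (⟨a, ha⟩ : I) := Subtype.ext (by simpa [Algebra.smul_def] using h1)
  have h3 := congrArg f h2
  rw [map_smul, map_smul, Algebra.smul_def, Algebra.smul_def] at h3
  apply mul_left_cancel₀ hs0
  rw [h3]
  field_simp
  linear_combination -(f ⟨a, ha⟩) * h1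

lemma divToHom_bijective {I : Submodule R K} (hI : I ≠ ⊥) (J : Submodule R K) :
    Function.Bijective (divToHom I J) := by
  constructor
  · intro c d h
    obtain ⟨a, ha, ha0⟩ := (Submodule.ne_bot_iff _).1 hI
    have := congrArg (fun f : I →ₗ[R] J => ((f ⟨a, ha⟩ : J) : K)) h
    exact Subtype.ext (mul_right_cancel₀ ha0 this)
  · intro f
    obtain ⟨c, hc⟩ := exists_mul_of_linearMap hI (J.subtype ∘ₗ f)
    refine ⟨⟨c, Submodule.mem_div_iff_forall_mul_mem.2 fun y hy => ?_⟩, ?_⟩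
    · have := hc ⟨y, hy⟩
      rw [← this]; exact (f _).2
    · ext x; exact (hc x).symm

/-- `Hom_R(I, J) ≃ (J : I)`. -/
noncomputable def homEquivDiv {I : Submodule R K} (hI : I ≠ ⊥) (J : Submodule R K) :
    (I →ₗ[R] J) ≃ₗ[R] ↥(J / I) :=
  (LinearEquiv.ofBijective (divToHom I J) (divToHom_bijective hI J)).symm

lemma homEquivDiv_mul {I : Submodule R K} (hI : I ≠ ⊥) (J : Submodule R K) (f : I →ₗ[R] J)
    (x : I) : (homEquivDiv hI J f : K) * x.1 = (f x : K) := by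
  have : divToHom I J (homEquivDiv hI J f) = f :=
    (LinearEquiv.ofBijective (divToHom I J) (divToHom_bijective hI J)).apply_symm_apply f
  conv_rhs => rw [← this]
  rfl

variable (R K) in
/-- `R`, viewed as the unit fractional ideal. -/
noncomputable def ringEquivOne : R ≃ₗ[R] ↥(1 : Submodule R K) :=
  (LinearEquiv.ofInjective (Algebra.linearMap R K) (IsFractionRing.injective R K)).trans
    (LinearEquiv.ofEq _ _ Submodule.one_eq_range.symm)

@[simp] lemma ringEquivOne_apply (r : R) : (ringEquivOne R K r : K) = algebraMap R K r := rfl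

/-- `Hom_R(I, R) ≃ (R : I)`. -/
noncomputable def dualEquiv {I : Submodule R K} (hI : I ≠ ⊥) :
    Module.Dual R I ≃ₗ[R] ↥(idealDual I) :=
  (LinearEquiv.congrRight (ringEquivOne R K)).trans (homEquivDiv hI 1)

lemma dualEquiv_mul {I : Submodule R K} (hI : I ≠ ⊥) (f : Module.Dual R I) (x : I) :
    (dualEquiv hI f : K) * x.1 = algebraMap R K (f x) :=
  homEquivDiv_mul hI 1 _ x

/-- A fractional ideal is reflexive as a module iff it equals its double inverse. -/
lemma isReflexive_iff {I : Submodule R K} (hI : IsFracIdeal I) :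
    Module.IsReflexive R I ↔ idealDual (idealDual I) = I := by
  let E : Module.Dual R (Module.Dual R I) ≃ₗ[R] ↥(idealDual (idealDual I)) :=
    (dualEquiv hI.ne_bot).symm.dualMap.trans (dualEquiv hI.dual.ne_bot)
  have hE : ∀ x : I, (E (Module.Dual.eval R I x) : K) = x.1 := by
    intro x
    obtain ⟨a, ha, ha0⟩ := hI.dual.exists_ne
    apply mul_right_cancel₀ ha0
    have h1 := dualEquiv_mul hI.dual.ne_bot
      ((dualEquiv hI.ne_bot).symm.dualMap (Module.Dual.eval R I x)) ⟨a, ha⟩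
    have h2 := dualEquiv_mul hI.ne_bot ((dualEquiv hI.ne_bot).symm ⟨a, ha⟩) x
    rw [LinearEquiv.apply_symm_apply] at h2
    rw [mul_comm x.1, h2]
    exact h1
  constructor
  · intro h
    apply le_antisymm _ (le_idealDual_idealDual I)
    intro c hc
    obtain ⟨x, hx⟩ := (Module.bijective_dual_eval R I).2 (E.symm ⟨c, hc⟩)
    have := hE x
    rw [hx, LinearEquiv.apply_symm_apply] at this
    have h2 : c = x.1 := this
    rw [h2]; exact x.2
  · intro h
    refine ⟨⟨fun x y hxy => ?_, fun φ => ?_⟩⟩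
    · exact Subtype.ext (by rw [← hE x, ← hE y, hxy])
    · refine ⟨⟨(E φ).1, h.le (E φ).2⟩, E.injective (Subtype.ext ?_)⟩
      rw [hE]

/-- A full-rank embedding of a module in a `K`-vector space is its localization at `0`. -/
lemma isLocalizedModule_of_span {A V : Type*} [AddCommGroup A] [Module R A] [AddCommGroup V]
    [Module K V] [Module R V] [IsScalarTower R K V] (f : A →ₗ[R] V) (hf : Function.Injective f)
    (hs : Submodule.span K (Set.range f) = ⊤) : IsLocalizedModule (nonZeroDivisors R) f := by
  rw [isLocalizedModule_iff]
  refine ⟨fun x => ?_, fun y => ?_, fun h => ⟨1, by rw [hf h]⟩⟩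
  · have hx0 : algebraMap R K x ≠ 0 := by simpa using nonZeroDivisors.ne_zero x.2
    rw [Module.End.isUnit_iff]
    constructor
    · intro a b hab
      simp only [Module.algebraMap_end_apply] at hab
      rw [← algebraMap_smul K, ← algebraMap_smul K (x : R) b] at hab
      have := congrArg (fun z => (algebraMap R K x)⁻¹ • z) hab
      simpa only [smul_smul, inv_mul_cancel₀ hx0, one_smul] using this
    · intro b
      refine ⟨(algebraMap R K x)⁻¹ • b, ?_⟩
      simp only [Module.algebraMap_end_apply]
      rw [← algebraMap_smul K, smul_smul, mul_inv_cancel₀ hx0, one_smul]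
  · have hy : y ∈ Submodule.span K (Set.range f) := hs ▸ Submodule.mem_top
    induction hy using Submodule.span_induction with
    | mem y hy => obtain ⟨a, rfl⟩ := hy; exact ⟨(a, 1), by simp⟩
    | zero => exact ⟨(0, 1), by simp⟩
    | add y z _ _ hy hz =>
      obtain ⟨⟨a, s⟩, ha⟩ := hy
      obtain ⟨⟨b, t⟩, hb⟩ := hz
      refine ⟨(t • a + s • b, s * t), ?_⟩
      simp only at ha hb ⊢
      rw [smul_add, map_add, mul_comm s t, mul_smul, ha, mul_comm t s, mul_smul, hb]
      simp [Submonoid.smul_def]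
    | smul k y _ hy =>
      obtain ⟨⟨a, s⟩, ha⟩ := hy
      obtain ⟨r, t, ht, rfl⟩ := IsFractionRing.div_surjective (A := R) k
      have ht0 : algebraMap R K t ≠ 0 := by simpa using nonZeroDivisors.ne_zero ht
      refine ⟨(r • a, s * ⟨t, ht⟩), ?_⟩
      simp only [map_smul, ← ha, Submonoid.smul_def, Submonoid.coe_mul] at ha ⊢
      rw [← algebraMap_smul K r, ← algebraMap_smul K (s : R), ← algebraMap_smul K ((s : R) * t),
        smul_smul, smul_smul, map_mul]
      congr 1
      field_simp

lemma span_subtype_eq_top {I : Submodule R K} (hI : I ≠ ⊥) :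
    Submodule.span K (Set.range I.subtype) = ⊤ := by
  obtain ⟨a, ha, ha0⟩ := (Submodule.ne_bot_iff _).1 hI
  rw [eq_top_iff]
  intro x _
  have : x = (x / a) • a := by rw [smul_eq_mul, div_mul_cancel₀ _ ha0]
  rw [this]
  exact Submodule.smul_mem _ _ (Submodule.subset_span ⟨⟨a, ha⟩, rfl⟩)

/-- A divisorial fractional ideal is a divisorial module. -/
lemma isDivisorialModule_of_ideal [IsNoetherianRing R] {I : Submodule R K} (hI : IsFracIdeal I)
    (hd : idealDual (idealDual I) = I) : IsDivisorialModule R I := by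
  refine ⟨Module.Finite.iff_fg.2 hI.fg, (isReflexive_iff hI).2 hd, ?_⟩
  let e : FractionRing R ≃ₐ[R] K := FractionRing.algEquiv R K
  let _ : Algebra (FractionRing R) K := e.toRingEquiv.toRingHom.toAlgebra
  have : IsScalarTower R (FractionRing R) K := IsScalarTower.of_algebraMap_eq fun r =>
    (e.commutes r).symm
  have hloc := isLocalizedModule_of_span I.subtype I.subtype_injective (span_subtype_eq_top hI.ne_bot)
  have hb := IsLocalizedModule.isBaseChange (nonZeroDivisors R) (FractionRing R) I.subtype
  unfold HasRankOne
  rw [hb.equiv.finrank_eq]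
  exact finrank_eq_one (1 : K) one_ne_zero fun w => ⟨e.symm w, by
    rw [Algebra.smul_def, mul_one]; exact e.apply_symm_apply w⟩

end Ideals

/-! ### Classes of fractional ideals -/

section Classes

variable {R : Type u} [CommRing R] [IsDomain R]

lemma IsDivisorialModule.of_equiv {M N : Type u} [AddCommGroup M] [Module R M] [AddCommGroup N]
    [Module R N] (h : IsDivisorialModule R M) (e : M ≃ₗ[R] N) : IsDivisorialModule R N := by
  obtain ⟨h1, h2, h3⟩ := h
  refine ⟨Module.Finite.equiv e, Module.equiv e, ?_⟩
  unfold HasRankOne at h3 ⊢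
  rw [← h3]
  exact ((LinearEquiv.baseChange R (FractionRing R) M N e).finrank_eq).symm

/-- A divisorial module is isomorphic to a divisorial fractional ideal. -/
lemma IsDivisorialModule.exists_ideal {N : Type u} [AddCommGroup N] [Module R N]
    (h : IsDivisorialModule R N) : ∃ I : Submodule R (FractionRing R), IsFracIdeal I ∧
      idealDual (idealDual I) = I ∧ Nonempty (N ≃ₗ[R] I) := by
  obtain ⟨h1, h2, h3⟩ := h
  have htf : Module.IsTorsionFree R N := inferInstance
  unfold HasRankOne at h3
  have : Module.Finite (FractionRing R) (FractionRing R ⊗[R] N) := inferInstance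
  let e : (FractionRing R ⊗[R] N) ≃ₗ[FractionRing R] FractionRing R :=
    LinearEquiv.ofFinrankEq _ _ (by rw [h3, Module.finrank_self])
  let f : N →ₗ[R] FractionRing R :=
    (e.toLinearMap.restrictScalars R) ∘ₗ (TensorProduct.mk R (FractionRing R) N 1)
  have hf : Function.Injective f := by
    apply (e.injective).comp
    intro x y hxy
    have hloc : IsLocalizedModule (nonZeroDivisors R) (TensorProduct.mk R (FractionRing R) N 1) :=
      inferInstance
    obtain ⟨c, hc⟩ := hloc.exists_of_eq hxy
    exact (smul_right_injective N (nonZeroDivisors.ne_zero c.2)) hc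
  let g := LinearEquiv.ofInjective f hf
  have : Nontrivial N := by
    by_contra hN
    rw [not_nontrivial_iff_subsingleton] at hN
    have : Subsingleton (FractionRing R ⊗[R] N) := inferInstance
    rw [Module.finrank_zero_of_subsingleton] at h3
    exact zero_ne_one h3
  have hfr : IsFracIdeal (LinearMap.range f) := by
    refine IsFracIdeal.of_fg ?_ (Module.Finite.iff_fg.1 (Module.Finite.equiv g))
    intro h0
    obtain ⟨x, hx⟩ := exists_ne (0 : N)
    apply hx
    apply hf
    rw [map_zero]
    exact (Submodule.mem_bot R).1 (h0 ▸ LinearMap.mem_range_self f x)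
  exact ⟨LinearMap.range f, hfr, (isReflexive_iff hfr).1 (Module.equiv g), ⟨g⟩⟩

variable [IsNoetherianRing R] [IsIntegrallyClosed R]
variable {Cl : Type u} [AddCommGroup Cl] (hCl : DivisorClassGroupData R Cl)
variable {K : Type u} [Field K] [Algebra R K] [IsFractionRing R K]

/-- The class of the divisorial closure of a fractional ideal. -/
noncomputable def idealClass (I : Submodule R K) : Cl :=
  hCl.cl (ModuleCat.of R ↥(idealDual (idealDual I)))

lemma idealClass_congr {I J : Submodule R K} (h : idealDual I = idealDual J) :
    idealClass hCl I = idealClass hCl J := by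
  unfold idealClass; rw [h]

lemma IsFracIdeal.divisorial {I : Submodule R K} (hI : IsFracIdeal I) :
    IsDivisorialModule R ↥(idealDual (idealDual I)) :=
  isDivisorialModule_of_ideal hI.dual.dual (idealDual_triple _)

lemma cl_eq_idealClass {N : Type u} [AddCommGroup N] [Module R N] {I : Submodule R K}
    (hI : IsFracIdeal I) (hd : idealDual (idealDual I) = I) (e : N ≃ₗ[R] I) :
    hCl.cl (ModuleCat.of R N) = idealClass hCl I := by
  refine (hCl.cl_eq_iff _ _ ((isDivisorialModule_of_ideal hI hd).of_equiv e.symm)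
    hI.divisorial).2 ⟨e.trans (LinearEquiv.ofEq _ _ hd.symm)⟩

lemma idealClass_span {u : K} (hu : u ≠ 0) : idealClass hCl (R ∙ u) = 0 := by
  have key : ∀ v : K, v ≠ 0 → idealDual (R ∙ v) = R ∙ v⁻¹ := by
    intro v hv
    ext x
    rw [mem_idealDual, Submodule.mem_span_singleton]
    constructor
    · intro h
      obtain ⟨r, hr⟩ := Submodule.mem_one.1 (h v (Submodule.mem_span_singleton_self v))
      refine ⟨r, ?_⟩
      rw [Algebra.smul_def, hr, mul_assoc, mul_inv_cancel₀ hv, mul_one]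
    · rintro ⟨r, rfl⟩ y hy
      obtain ⟨s, rfl⟩ := Submodule.mem_span_singleton.1 hy
      refine Submodule.mem_one.2 ⟨r * s, ?_⟩
      rw [Algebra.smul_def, Algebra.smul_def, map_mul]
      field_simp
  have hdd : idealDual (idealDual (R ∙ u)) = R ∙ u := by
    rw [key u hu, key _ (inv_ne_zero hu), inv_inv]
  have hI : IsFracIdeal (R ∙ u) :=
    ⟨by simpa using hu, u, le_rfl⟩
  have htf : Module.IsTorsionFree R K := inferInstance
  let e : R ≃ₗ[R] ↥(R ∙ u) := LinearEquiv.toSpanNonzeroSingleton R K u hu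
  rw [← cl_eq_idealClass hCl hI hdd e, hCl.cl_ring]

lemma idealClass_one : idealClass hCl (1 : Submodule R K) = 0 := by
  rw [Submodule.one_eq_span]; exact idealClass_span hCl one_ne_zero

/-- `(A ⊗ B)^* ≃ (R : AB)`. -/
noncomputable def dualTensorEquiv {A B : Submodule R K} (hA : A ≠ ⊥) (hB : B ≠ ⊥) :
    Module.Dual R (A ⊗[R] B) ≃ₗ[R] ↥(idealDual (A * B)) :=
  ((TensorProduct.lift.equiv (RingHom.id R) A B R).symm.trans
    (LinearEquiv.congrRight (dualEquiv hB))).trans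
    ((homEquivDiv hA (idealDual B)).trans
      (LinearEquiv.ofEq _ _ (by rw [mul_comm, idealDual_mul])))

lemma idealClass_mul {I J : Submodule R K} (hI : IsFracIdeal I) (hJ : IsFracIdeal J) :
    idealClass hCl (I * J) = idealClass hCl I + idealClass hCl J := by
  have hA := hI.dual.dual
  have hB := hJ.dual.dual
  have h1 : idealDual (idealDual (idealDual I) * idealDual (idealDual J)) = idealDual (I * J) := by
    rw [idealDual_mul_congr (idealDual_triple I), mul_comm,
      idealDual_mul_congr (idealDual_triple J), mul_comm]
  have e := (dualTensorEquiv hA.ne_bot hB.ne_bot).symm.dualMap.trans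
    (dualEquiv (hA.mul hB).dual.ne_bot)
  rw [h1] at e
  unfold idealClass
  rw [hCl.cl_add _ _ hI.divisorial hJ.divisorial]
  exact ((hCl.cl_eq_iff _ _ ((hI.mul hJ).divisorial.of_equiv e.symm) (hI.mul hJ).divisorial).2
    ⟨e⟩).symm

lemma idealClass_dual {I : Submodule R K} (hI : IsFracIdeal I) :
    idealClass hCl (idealDual I) = - idealClass hCl I := by
  have h : idealClass hCl (I * idealDual I) = idealClass hCl (1 : Submodule R K) :=
    idealClass_congr hCl (by rw [idealDual_mul_self hI, idealDual_one])
  rw [idealClass_mul hCl hI hI.dual, idealClass_one] at h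
  exact eq_neg_of_add_eq_zero_right h

lemma div_eq_idealDual {I J : Submodule R K} (hJ : idealDual (idealDual J) = J) :
    J / I = idealDual (idealDual J * I) := by
  rw [idealDual_mul, hJ]

/-- `Hom_R(M, N)` is divisorial of class `[N] - [M]`. -/
lemma divisorial_hom {M N : Type u} [AddCommGroup M] [Module R M] [AddCommGroup N]
    [Module R N] (hM : IsDivisorialModule R M) (hN : IsDivisorialModule R N) :
    IsDivisorialModule R (M →ₗ[R] N) ∧
    hCl.cl (ModuleCat.of R (M →ₗ[R] N)) =
      hCl.cl (ModuleCat.of R N) - hCl.cl (ModuleCat.of R M) := by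
  obtain ⟨I, hI, hdI, ⟨eI⟩⟩ := hM.exists_ideal
  obtain ⟨J, hJ, hdJ, ⟨eJ⟩⟩ := hN.exists_ideal
  have e : (M →ₗ[R] N) ≃ₗ[R] ↥(J / I) :=
    (LinearEquiv.arrowCongr eI eJ).trans (homEquivDiv hI.ne_bot J)
  have hd : idealDual (idealDual (J / I)) = J / I := by
    rw [div_eq_idealDual hdJ, idealDual_triple]
  refine ⟨(isDivisorialModule_of_ideal (hJ.div hI) hd).of_equiv e.symm, ?_⟩
  rw [cl_eq_idealClass hCl (hJ.div hI) hd e, cl_eq_idealClass hCl hI hdI eI,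
    cl_eq_idealClass hCl hJ hdJ eJ, div_eq_idealDual hdJ, idealClass_dual hCl (hJ.dual.mul hI),
    idealClass_mul hCl hJ.dual hI, idealClass_dual hCl hJ]
  abel

lemma isDivisorialModule_self : IsDivisorialModule R R :=
  (isDivisorialModule_of_ideal (K := FractionRing R) IsFracIdeal.one
    (by rw [idealDual_one, idealDual_one])).of_equiv (ringEquivOne R (FractionRing R)).symm

/-- The dual of a divisorial module is divisorial of opposite class. -/
lemma divisorial_dual {M : Type u} [AddCommGroup M] [Module R M]
    (hM : IsDivisorialModule R M) : IsDivisorialModule R (Module.Dual R M) ∧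
    hCl.cl (ModuleCat.of R (Module.Dual R M)) = - hCl.cl (ModuleCat.of R M) := by
  have := divisorial_hom hCl hM (isDivisorialModule_self (R := R))
  rw [hCl.cl_ring, zero_sub] at this
  exact this

/-- Endomorphisms of a divisorial module are multiplications by elements of `R`. -/
lemma exists_smul_of_end {M : Type u} [AddCommGroup M] [Module R M]
    (hM : IsDivisorialModule R M) (f : M →ₗ[R] M) : ∃ r : R, ∀ x, f x = r • x := by
  obtain ⟨I, hI, hdI, ⟨e⟩⟩ := hM.exists_ideal
  let g : I →ₗ[R] I := e.toLinearMap ∘ₗ f ∘ₗ e.symm.toLinearMap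
  have hc : ((homEquivDiv hI.ne_bot I g : ↥(I / I)) : FractionRing R) ∈
      (1 : Submodule R (FractionRing R)) :=
    (div_self_eq_one hI).le (homEquivDiv hI.ne_bot I g).2
  obtain ⟨r, hr⟩ := Submodule.mem_one.1 hc
  refine ⟨r, fun x => e.injective (Subtype.ext ?_)⟩
  have h2 := homEquivDiv_mul hI.ne_bot I g (e x)
  rw [← hr] at h2
  simp only [g, LinearMap.comp_apply, LinearEquiv.coe_coe, LinearEquiv.symm_apply_apply] at h2
  rw [← h2, map_smul, Submodule.coe_smul, Algebra.smul_def]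

end Classes

/-! ### Determinant ideals of lattices -/

section Lattice

variable {R : Type u} [CommRing R] [IsDomain R]
variable {K : Type u} [Field K] [Algebra R K] [IsFractionRing R K]
variable {ι : Type*} [Fintype ι] [DecidableEq ι]
variable {A : Type*} [AddCommGroup A] [Module R A]

/-- The fractional ideal generated by the determinants of tuples of vectors in a lattice
`f : A → K^ι`. -/
def detIdeal (f : A →ₗ[R] (ι → K)) : Submodule R K :=
  Submodule.span R (Set.range fun a : ι → A => (Matrix.of fun i => f (a i)).det)

lemma det_mem_detIdeal (f : A →ₗ[R] (ι → K)) (a : ι → A) :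
    (Matrix.of fun i => f (a i)).det ∈ detIdeal f :=
  Submodule.subset_span ⟨a, rfl⟩

/-- A full-rank embedding of a module in the vector space `K^ι`. -/
structure IsLattice (f : A →ₗ[R] (ι → K)) : Prop where
  inj : Function.Injective f
  span_eq : Submodule.span K (Set.range f) = ⊤

lemma exists_basis_of_span {f : A →ₗ[R] (ι → K)} (hf : Submodule.span K (Set.range f) = ⊤) :
    ∃ a : ι → A, LinearIndependent K fun i => f (a i) := by
  let b := Basis.ofSpan (K := K) hf.ge
  have hfin := FiniteDimensional.fintypeBasisIndex b
  have hc := Module.finrank_eq_card_basis b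
  rw [Module.finrank_fintype_fun_eq_card] at hc
  let e := Fintype.equivOfCardEq hc
  have hr : ∀ i, ∃ x : A, f x = b (e i) := by
    intro i
    exact Basis.ofSpan_subset (K := K) hf.ge ⟨e i, rfl⟩
  choose a ha using hr
  refine ⟨a, ?_⟩
  simp only [ha]
  exact b.linearIndependent.comp e e.injective

lemma detIdeal_isFracIdeal [Module.Finite R A] {f : A →ₗ[R] (ι → K)} (hf : IsLattice f) :
    IsFracIdeal (detIdeal f) := by
  constructor
  · obtain ⟨a, ha⟩ := exists_basis_of_span hf.span_eq
    have : IsUnit (Matrix.of fun i => f (a i)) :=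
      Matrix.linearIndependent_rows_iff_isUnit.1 ha
    intro h0
    have h1 := det_mem_detIdeal f a
    rw [h0, Submodule.mem_bot] at h1
    exact ((Matrix.isUnit_iff_isUnit_det _).1 this).ne_zero h1
  · let J : Submodule R K := (⨆ i, LinearMap.range ((LinearMap.proj i).comp f)) ⊔ (R ∙ (1 : K))
    have hJ : J.FG := by
      refine Submodule.FG.sup (Submodule.fg_iSup _ fun i => ?_) (Submodule.fg_span_singleton _)
      exact Module.Finite.iff_fg.1 inferInstance
    have hJ0 : J ≠ ⊥ := by
      intro h
      have : (1 : K) ∈ J := le_sup_right (a := ⨆ i, LinearMap.range ((LinearMap.proj i).comp f))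
        (Submodule.mem_span_singleton_self (1 : K))
      rw [h, Submodule.mem_bot] at this
      exact one_ne_zero this
    obtain ⟨u, hu⟩ := (IsFracIdeal.of_fg hJ0 hJ).le_span
    refine ⟨u ^ Fintype.card ι, ?_⟩
    rw [detIdeal, Submodule.span_le]
    rintro _ ⟨a, rfl⟩
    have : ∀ i j, ∃ r : R, r • u = f (a i) j := by
      intro i j
      refine Submodule.mem_span_singleton.1 (hu ?_)
      refine le_sup_left (b := R ∙ (1 : K)) ((le_iSup (fun i => LinearMap.range ((LinearMap.proj i).comp f)) j) ⟨a i, rfl⟩)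
    choose r hr using this
    refine Submodule.mem_span_singleton.2 ⟨(Matrix.of r).det, ?_⟩
    have hm : (Matrix.of fun i => f (a i)) = u • ((algebraMap R K).mapMatrix (Matrix.of r)) := by
      ext i j
      simp [← hr, Algebra.smul_def, mul_comm]
    simp only [hm]
    rw [Matrix.det_smul, ← RingHom.map_det, Algebra.smul_def, mul_comm]

lemma detIdeal_reindex {κ : Type*} [Fintype κ] [DecidableEq κ] (e : ι ≃ κ)
    (f : A →ₗ[R] (ι → K)) :
    detIdeal ((LinearMap.funLeft R K e.symm).comp f) = detIdeal f := by
  have h : ∀ a : κ → A, (Matrix.of fun i => ((LinearMap.funLeft R K e.symm).comp f) (a i)).det =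
      (Matrix.of fun i => f (a (e i))).det := by
    intro a
    rw [← Matrix.det_reindex_self e]
    congr 1
    ext i j
    simp [LinearMap.funLeft]
  apply le_antisymm
  · rw [detIdeal, Submodule.span_le]
    rintro _ ⟨a, rfl⟩
    simp only [h]
    exact det_mem_detIdeal f _
  · rw [detIdeal, Submodule.span_le]
    rintro _ ⟨a, rfl⟩
    have h2 := det_mem_detIdeal ((LinearMap.funLeft R K e.symm).comp f) (fun i => a (e.symm i))
    rw [h] at h2
    simpa using h2

lemma IsLattice.reindex {κ : Type*} [Fintype κ] [DecidableEq κ] (e : ι ≃ κ)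
    {f : A →ₗ[R] (ι → K)} (hf : IsLattice f) :
    IsLattice ((LinearMap.funLeft R K e.symm).comp f) := by
  refine ⟨(LinearMap.funLeft_injective_of_surjective R K _ e.symm.surjective).comp hf.inj, ?_⟩
  have : Set.range ((LinearMap.funLeft R K e.symm).comp f) =
      (LinearMap.funLeft K K e.symm) '' (Set.range f) := by
    rw [← Set.range_comp]; rfl
  rw [this, Submodule.span_image, hf.span_eq, Submodule.map_top, LinearMap.range_eq_top]
  exact LinearMap.funLeft_surjective_of_injective K K _ e.symm.injective

/-- Two lattice structures on the same module differ by an invertible matrix, hence their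
determinant ideals differ by a scalar. -/
lemma detIdeal_unique {f f' : A →ₗ[R] (ι → K)} (hf : IsLattice f) (hf' : IsLattice f') :
    ∃ u : K, u ≠ 0 ∧ detIdeal f' = (R ∙ u) * detIdeal f := by
  have h1 := isLocalizedModule_of_span f hf.inj hf.span_eq
  have h2 := isLocalizedModule_of_span f' hf'.inj hf'.span_eq
  let g0 : (ι → K) ≃ₗ[R] (ι → K) := IsLocalizedModule.linearEquiv (nonZeroDivisors R) f f'
  have hg0 : ∀ a, g0 (f a) = f' a := fun a =>
    IsLocalizedModule.linearEquiv_apply (nonZeroDivisors R) f f' a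
  let g : (ι → K) ≃ₗ[K] (ι → K) :=
    LinearEquiv.extendScalarsOfIsLocalization (nonZeroDivisors R) K g0
  have hg : ∀ a, g (f a) = f' a := hg0
  let G := LinearMap.toMatrix' g.toLinearMap
  have hG : ∀ a : ι → A, (Matrix.of fun i => f' (a i)).det =
      G.det * (Matrix.of fun i => f (a i)).det := by
    intro a
    have : (Matrix.of fun i => f' (a i)) = (Matrix.of fun i => f (a i)) * G.transpose := by
      ext i j
      rw [Matrix.of_apply, ← hg]
      have : g (f (a i)) = G.mulVec (f (a i)) := by
        rw [LinearMap.toMatrix'_mulVec]; rfl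
      rw [this]
      simp [Matrix.mul_apply, Matrix.mulVec, dotProduct, mul_comm]
    rw [this, Matrix.det_mul, Matrix.det_transpose, mul_comm]
  refine ⟨G.det, ?_, ?_⟩
  · rw [LinearMap.det_toMatrix']
    exact (LinearEquiv.isUnit_det' g).ne_zero
  · rw [detIdeal, detIdeal, Submodule.span_mul_span]
    congr 1
    ext x
    simp only [Set.singleton_mul, Set.mem_image, Set.mem_range, hG]
    constructor
    · rintro ⟨a, rfl⟩; exact ⟨_, ⟨a, rfl⟩, rfl⟩
    · rintro ⟨_, ⟨a, rfl⟩, rfl⟩; exact ⟨a, rfl⟩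

/-- If the first `k` columns of a square matrix have entries in `R` and the rest of every row is a
vector of a lattice, then the determinant lies in the determinant ideal of that lattice. -/
lemma det_mem_of_columns {r : ℕ} (f : A →ₗ[R] (Fin r → K)) (k : ℕ) :
    ∀ N : Matrix (Fin (r + k)) (Fin (r + k)) K,
      (∀ i, ∀ j : Fin (r + k), (j : ℕ) < k → N i j ∈ (1 : Submodule R K)) →
      (∀ i, ∃ a : A, ∀ j : Fin r, N i ⟨k + j, by omega⟩ = f a j) →
      N.det ∈ detIdeal f := by
  induction k with
  | zero =>
    intro N _ h
    choose a ha using h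
    have : N = Matrix.of fun i => f (a i) := by
      ext i j
      rw [Matrix.of_apply, ← ha]
      congr 1
      exact Fin.ext (by simp)
    rw [this]
    exact det_mem_detIdeal f a
  | succ k ih =>
    intro N h1 h2
    rw [show N.det = _ from Matrix.det_succ_column_zero (n := r + k) N]
    refine Submodule.sum_mem _ fun i _ => ?_
    have hm := ih (Matrix.submatrix N (Fin.succAbove (n := r + k) i) Fin.succ)
      (fun i' j hj => h1 _ _ (by simpa using hj)) (fun i' => by
        obtain ⟨a, ha⟩ := h2 (Fin.succAbove (n := r + k) i i')
        refine ⟨a, fun j => ?_⟩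
        rw [← ha, Matrix.submatrix_apply]
        congr 1
        exact Fin.ext (by simp; omega))
    obtain ⟨t, ht⟩ := Submodule.mem_one.1 (h1 i 0 (by simp))
    have : (-1 : K) ^ (i : ℕ) * N i 0 = algebraMap R K ((-1) ^ (i : ℕ) * t) := by
      rw [map_mul, ht]; simp
    rw [this, ← Algebra.smul_def]
    exact Submodule.smul_mem _ _ hm

/-- To see that `I ⊆ J` have the same divisorial closure, it suffices that `(q s) ^ m` multiplies `J`
into `I`, for `s` in a generating set of some `D` and `q ∈ R : D`: the elements `q s` generate the
ideal `D (R : D)`, whose divisorial closure is `R`. -/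
lemma idealDual_eq_of_pow [IsNoetherianRing R] [IsIntegrallyClosed R] {I J D : Submodule R K}
    (hD : IsFracIdeal D) (hIJ : I ≤ J) (S : Set K) (hS : D = Submodule.span R S)
    (m : ℕ) (h : ∀ s ∈ S, ∀ q ∈ idealDual D, ∀ z ∈ J, (q * s) ^ m * z ∈ I) :
    idealDual I = idealDual J := by
  refine le_antisymm ?_ (idealDual_anti hIJ)
  intro z hz
  rw [mem_idealDual] at hz ⊢
  intro y hy
  set w := z * y with hw
  let b : Ideal R := (1 : Submodule R K).comap (LinearMap.toSpanSingleton R K w)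
  have hb : ∀ r, r ∈ b ↔ algebraMap R K r * w ∈ (1 : Submodule R K) := by
    intro r
    simp [b, Algebra.smul_def]
  let a : Ideal R := (D * idealDual D).comap (Algebra.linearMap R K)
  have ha : ∀ r, r ∈ a ↔ algebraMap R K r ∈ D * idealDual D := fun r => Iff.rfl
  have key : ∀ x ∈ D * idealDual D, ∃ r ∈ b.radical, algebraMap R K r = x := by
    intro x hx
    have hx' : x ∈ Submodule.span R S * Submodule.span R (idealDual D : Set K) := by
      rw [← hS, Submodule.span_eq]; exact hx
    rw [Submodule.span_mul_span] at hx'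
    clear hx
    induction hx' using Submodule.span_induction with
    | mem x hx =>
      obtain ⟨s, hs, q, hq, rfl⟩ := hx
      have h1 : q * s ∈ (1 : Submodule R K) :=
        mem_idealDual.1 hq s (hS ▸ Submodule.subset_span hs)
      obtain ⟨r, hr⟩ := Submodule.mem_one.1 h1
      refine ⟨r, ⟨m, (hb _).2 ?_⟩, by rw [hr, mul_comm]⟩
      rw [map_pow, hr, hw, mul_left_comm]
      exact hz _ (h s hs q hq y hy)
    | zero => exact ⟨0, Submodule.zero_mem _, map_zero _⟩
    | add x y _ _ hx hy =>
      obtain ⟨r, hr, rfl⟩ := hx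
      obtain ⟨t, ht, rfl⟩ := hy
      exact ⟨r + t, Submodule.add_mem _ hr ht, map_add _ _ _⟩
    | smul c x _ hx =>
      obtain ⟨r, hr, rfl⟩ := hx
      exact ⟨c * r, Ideal.mul_mem_left _ _ hr, by rw [map_mul, Algebra.smul_def]⟩
  have hle : a ≤ b.radical := by
    intro r hr
    obtain ⟨t, ht, htr⟩ := key _ ((ha r).1 hr)
    rwa [← IsFractionRing.injective R K htr]
  obtain ⟨N, hN⟩ := Ideal.exists_pow_le_of_le_radical_of_fg hle (IsNoetherian.noetherian a)
  have step : ∀ N : ℕ, ∀ w : K, (∀ r ∈ a ^ N, algebraMap R K r * w ∈ (1 : Submodule R K)) →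
      w ∈ (1 : Submodule R K) := by
    intro N
    induction N with
    | zero => intro w h; simpa using h 1 (by simp)
    | succ N ih =>
      intro w h
      refine ih w fun r hr => ?_
      rw [← idealDual_mul_self hD, mem_idealDual]
      intro x hx
      obtain ⟨t, ht, rfl⟩ := key x hx
      have := h (r * t) (by rw [pow_succ]; exact Ideal.mul_mem_mul hr ((ha t).2 hx))
      rw [map_mul] at this
      convert this using 1
      ring
  exact step N w fun r hr => (hb r).1 (hN hr)

/-- A linear map to a vector space extends along injections of modules. -/
lemma exists_extension {B V : Type*} [AddCommGroup B] [Module R B] [AddCommGroup V] [Module R V]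
    [Module K V] [IsScalarTower R K V] (i : A →ₗ[R] B) (hi : Function.Injective i)
    (f : A →ₗ[R] V) : ∃ g : B →ₗ[R] V, ∀ a, g (i a) = f a := by
  have : Module.Flat R K := IsLocalization.flat K (nonZeroDivisors R)
  let i' : K ⊗[R] A →ₗ[K] K ⊗[R] B := i.baseChange K
  have hi' : Function.Injective i' := by
    have := Module.Flat.lTensor_preserves_injective_linearMap (M := K) i hi
    exact this
  obtain ⟨L, hL⟩ := i'.exists_leftInverse_of_injective (LinearMap.ker_eq_bot.2 hi')
  refine ⟨((f.liftBaseChange K).restrictScalars R) ∘ₗ (L.restrictScalars R) ∘ₗ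
    (TensorProduct.mk R K B 1), fun a => ?_⟩
  have h1 : i' (1 ⊗ₜ a) = 1 ⊗ₜ i a := by simp [i']
  have h2 : L (i' (1 ⊗ₜ a)) = 1 ⊗ₜ a := by
    have := LinearMap.congr_fun hL (1 ⊗ₜ[R] a)
    exact this
  simp only [LinearMap.comp_apply, LinearMap.restrictScalars_apply, TensorProduct.mk_apply]
  rw [← h1, h2]
  simp

/-- Determinant ideals are multiplicative, up to divisorial closure, on short exact sequences.
The inclusion of the product in the middle term comes from block triangular matrices. Conversely,
if `δ = q det(c)` is in `R` with `c` a tuple of elements of `C`, then `δ C` lies in the span of `c`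
by Cramer's rule, so `δ B` lies in the span of lifts of `c` and of `A`. This puts
`δ ^ (k + r) det(y)` in the product for every tuple `y` of `B`, and `idealDual_eq_of_pow` applies. -/
lemma exists_detIdeal_ses [IsNoetherianRing R] [IsIntegrallyClosed R] {B C : Type*}
    [AddCommGroup B] [Module R B] [AddCommGroup C] [Module R C] [Module.Finite R C] {r k : ℕ}
    (i : A →ₗ[R] B) (hi : Function.Injective i) (p : B →ₗ[R] C) (hp : Function.Surjective p)
    (hex : Function.Exact i p) {fA : A →ₗ[R] (Fin r → K)} (hA : IsLattice fA)
    {fC : C →ₗ[R] (Fin k → K)} (hC : IsLattice fC) :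
    ∃ fB : B →ₗ[R] (Fin k ⊕ Fin r → K), IsLattice fB ∧
      idealDual (detIdeal fA * detIdeal fC) = idealDual (detIdeal fB) := by
  obtain ⟨g, hg⟩ := exists_extension (K := K) i hi fA
  let fB : B →ₗ[R] (Fin k ⊕ Fin r → K) :=
    (LinearEquiv.sumArrowLequivProdArrow (Fin k) (Fin r) R K).symm.toLinearMap ∘ₗ
      (LinearMap.prod (fC ∘ₗ p) g)
  have hfB : ∀ y, fB y = Sum.elim (fC (p y)) (g y) := by
    intro y; ext (j | j) <;> simp [fB]
  have hpi : ∀ a, p (i a) = 0 := fun a => (hex (i a)).2 ⟨a, rfl⟩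
  have hlat : IsLattice fB := by
    constructor
    · rw [← LinearMap.ker_eq_bot, LinearMap.ker_eq_bot']
      intro y hy
      rw [hfB] at hy
      have h1 : fC (p y) = 0 := funext fun j => congrFun hy (Sum.inl j)
      have h2 : g y = 0 := funext fun j => congrFun hy (Sum.inr j)
      rw [← map_zero fC] at h1
      obtain ⟨a, rfl⟩ := (hex y).1 (hC.inj h1)
      rw [hg, ← map_zero fA] at h2
      rw [hA.inj h2, map_zero]
    · have hr : ∀ v : Fin r → K, Sum.elim (0 : Fin k → K) v ∈ Submodule.span K (Set.range fB) := by
        intro v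
        have hv : v ∈ Submodule.span K (Set.range fA) := hA.span_eq ▸ Submodule.mem_top
        induction hv using Submodule.span_induction with
        | mem v hv =>
          obtain ⟨a, rfl⟩ := hv
          refine Submodule.subset_span ⟨i a, ?_⟩
          rw [hfB, hpi, hg, map_zero]
        | zero => simpa using Submodule.zero_mem _
        | add v w _ _ hv hw =>
          have := Submodule.add_mem _ hv hw
          convert this using 1
          ext (j | j) <;> simp
        | smul c v _ hv =>
          have := Submodule.smul_mem _ c hv
          convert this using 1
          ext (j | j) <;> simp
      have hl : ∀ v : Fin k → K, ∃ w, Sum.elim v w ∈ Submodule.span K (Set.range fB) := by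
        intro v
        have hv : v ∈ Submodule.span K (Set.range fC) := hC.span_eq ▸ Submodule.mem_top
        induction hv using Submodule.span_induction with
        | mem v hv =>
          obtain ⟨c, rfl⟩ := hv
          obtain ⟨y, rfl⟩ := hp c
          exact ⟨g y, Submodule.subset_span ⟨y, hfB y⟩⟩
        | zero => exact ⟨0, by simpa using Submodule.zero_mem _⟩
        | add v w _ _ hv hw =>
          obtain ⟨v', hv⟩ := hv
          obtain ⟨w', hw⟩ := hw
          refine ⟨v' + w', ?_⟩
          have := Submodule.add_mem _ hv hw
          convert this using 1
          ext (j | j) <;> simp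
        | smul c v _ hv =>
          obtain ⟨v', hv⟩ := hv
          refine ⟨c • v', ?_⟩
          have := Submodule.smul_mem _ c hv
          convert this using 1
          ext (j | j) <;> simp
      rw [eq_top_iff]
      intro x _
      obtain ⟨w, hw⟩ := hl (x ∘ Sum.inl)
      have := Submodule.add_mem _ hw (hr (x ∘ Sum.inr - w))
      convert this using 1
      ext (j | j) <;> simp
  refine ⟨fB, hlat, ?_⟩
  refine idealDual_eq_of_pow (detIdeal_isFracIdeal hC) ?_ _ rfl (k + r) ?_
  · rw [detIdeal, detIdeal, Submodule.span_mul_span, Submodule.span_le]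
    rintro _ ⟨_, ⟨a, rfl⟩, _, ⟨c, rfl⟩, rfl⟩
    choose b hb using fun j => hp (c j)
    have h := det_mem_detIdeal fB (Sum.elim b (fun j => i (a j)))
    have hm : (Matrix.of fun j => fB (Sum.elim b (fun j => i (a j)) j)) =
        Matrix.fromBlocks (Matrix.of fun j => fC (c j)) (Matrix.of fun j => g (b j)) 0
          (Matrix.of fun j => fA (a j)) := by
      ext (s | s) (t | t) <;> simp [hfB, hb, hpi, hg]
    rw [hm, Matrix.det_fromBlocks_zero₂₁, mul_comm] at h
    exact h
  · rintro _ ⟨c, rfl⟩ q hq z hz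
    choose b hb using fun j => hp (c j)
    set T0 : Matrix (Fin k) (Fin k) K := Matrix.of fun j => fC (c j) with hT0
    have hdual : ∀ c : Fin k → C, ∃ t : R, algebraMap R K t =
        q * (Matrix.of fun j => fC (c j)).det := fun c =>
      Submodule.mem_one.1 (mem_idealDual.1 hq _ (det_mem_detIdeal fC c))
    obtain ⟨δ, hδ⟩ := hdual c
    have hcr : ∀ x : C, ∃ s : Fin k → R, δ • x = ∑ j, s j • c j := by
      intro x
      choose s hs using fun j => hdual (Function.update c j x)
      refine ⟨s, hC.inj ?_⟩
      rw [map_smul, map_sum]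
      simp only [map_smul]
      have h := Matrix.mulVec_cramer T0.transpose (fC x)
      ext l
      have hl := congrFun h l
      rw [Matrix.det_transpose, Pi.smul_apply, smul_eq_mul, Matrix.mulVec, dotProduct] at hl
      simp only [Matrix.cramer_transpose_apply, Matrix.transpose_apply] at hl
      rw [Pi.smul_apply, Algebra.smul_def, hδ, mul_assoc, ← hl, Finset.sum_apply, Finset.mul_sum]
      refine Finset.sum_congr rfl fun j _ => ?_
      rw [Pi.smul_apply, Algebra.smul_def, hs]
      have : (Matrix.of fun j' => fC (Function.update c j x j')) = T0.updateRow j (fC x) := by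
        ext s t
        by_cases hsj : s = j
        · subst hsj; simp
        · simp [hsj, hT0]
      rw [this]
      simp only [hT0, Matrix.of_apply]
      ring
    have hrow : ∀ y : B, ∃ (s : Fin k → R) (a : A), δ • y = ∑ j, s j • b j + i a := by
      intro y
      obtain ⟨s, hs⟩ := hcr (p y)
      have : p (δ • y - ∑ j, s j • b j) = 0 := by
        rw [map_sub, map_smul, hs, map_sum]
        simp [hb]
      obtain ⟨a, ha⟩ := (hex _).1 this
      exact ⟨s, a, by rw [ha]; abel⟩
    have hgen : ∀ y : Fin k ⊕ Fin r → B,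
        (q * T0.det) ^ (k + r) * (Matrix.of fun t => fB (y t)).det ∈ detIdeal fA * detIdeal fC := by
      intro y
      choose s a hsa using fun t => hrow (y t)
      let N : Matrix (Fin k ⊕ Fin r) (Fin k ⊕ Fin r) K :=
        Matrix.of fun t => Sum.elim (fun j => algebraMap R K (s t j)) (fA (a t))
      let T : Matrix (Fin k ⊕ Fin r) (Fin k ⊕ Fin r) K :=
        Matrix.fromBlocks T0 (Matrix.of fun j => g (b j)) 0 1
      have hNT : (algebraMap R K δ) • (Matrix.of fun t => fB (y t)) = N * T := by
        ext t l
        have h1 : (algebraMap R K δ) * fB (y t) l = fB (δ • y t) l := by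
          rw [map_smul, Pi.smul_apply, Algebra.smul_def]
        rw [Matrix.smul_apply, Matrix.of_apply, smul_eq_mul, h1, hsa, Matrix.mul_apply,
          Fintype.sum_sum_type, hfB]
        rcases l with l | l
        · simp [N, T, hpi, hb, hT0, Algebra.smul_def]
        · simp [N, T, hg, Algebra.smul_def, Matrix.one_apply]
      have hdet := congrArg Matrix.det hNT
      rw [Matrix.det_smul, Matrix.det_mul, Matrix.det_fromBlocks_zero₂₁, Matrix.det_one, mul_one,
        Fintype.card_sum, Fintype.card_fin, Fintype.card_fin, hδ] at hdet
      rw [hdet]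
      refine Submodule.mul_mem_mul ?_ (det_mem_detIdeal fC c)
      let e : Fin k ⊕ Fin r ≃ Fin (r + k) := finSumFinEquiv.trans (finCongr (add_comm k r))
      rw [← Matrix.det_reindex_self e N]
      refine det_mem_of_columns fA k _ ?_ ?_
      · intro t j hj
        have : e.symm j = Sum.inl ⟨j, hj⟩ := by
          rw [Equiv.symm_apply_eq]
          exact Fin.ext (by simp [e])
        rw [Matrix.reindex_apply, Matrix.submatrix_apply, this]
        exact Submodule.mem_one.2 ⟨_, rfl⟩
      · intro t
        refine ⟨a (e.symm t), fun j => ?_⟩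
        have : e.symm ⟨k + j, by omega⟩ = Sum.inr j := by
          rw [Equiv.symm_apply_eq]
          exact Fin.ext (by simp [e]; omega)
        rw [Matrix.reindex_apply, Matrix.submatrix_apply, this]
        rfl
    induction hz using Submodule.span_induction with
    | mem z hz => obtain ⟨y, rfl⟩ := hz; exact hgen y
    | zero => rw [mul_zero]; exact Submodule.zero_mem _
    | add z w _ _ hz hw => rw [mul_add]; exact Submodule.add_mem _ hz hw
    | smul c z _ hz => rw [mul_smul_comm]; exact Submodule.smul_mem _ _ hz

end Lattice

/-! ### The determinant class -/

section Det

variable {R : Type u} [CommRing R] [IsDomain R] [IsNoetherianRing R] [IsIntegrallyClosed R]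
variable {Cl : Type u} [AddCommGroup Cl] (hCl : DivisorClassGroupData R Cl)
variable {A B C : Type u} [AddCommGroup A] [Module R A] [AddCommGroup B] [Module R B]
  [AddCommGroup C] [Module R C]

/-- The torsion-free module `A` has determinant class `c`: for some full-rank embedding in a
finite-dimensional vector space, `c` is the class of the determinant ideal. -/
def HasDet (A : Type u) [AddCommGroup A] [Module R A] (c : Cl) : Prop :=
  ∃ (r : ℕ) (f : A →ₗ[R] (Fin r → FractionRing R)), IsLattice f ∧ idealClass hCl (detIdeal f) = c

lemma exists_lattice [Module.Finite R A] [Module.IsTorsionFree R A] :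
    ∃ (r : ℕ) (f : A →ₗ[R] (Fin r → FractionRing R)), IsLattice f := by
  let e := (Module.finBasis (FractionRing R) (FractionRing R ⊗[R] A)).equivFun
  let f : A →ₗ[R] (Fin _ → FractionRing R) :=
    (e.toLinearMap.restrictScalars R) ∘ₗ (TensorProduct.mk R (FractionRing R) A 1)
  refine ⟨_, f, ?_, ?_⟩
  · apply (e.injective).comp
    intro x y hxy
    have hloc : IsLocalizedModule (nonZeroDivisors R) (TensorProduct.mk R (FractionRing R) A 1) :=
      inferInstance
    obtain ⟨c, hc⟩ := hloc.exists_of_eq hxy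
    exact (smul_right_injective A (nonZeroDivisors.ne_zero c.2)) hc
  · have h1 : Set.range f = e '' (Set.range (TensorProduct.mk R (FractionRing R) A 1)) := by
      rw [← Set.range_comp]; rfl
    have h2 : Submodule.span (FractionRing R) (Set.range (TensorProduct.mk R (FractionRing R) A 1))
        = ⊤ := by
      rw [eq_top_iff]
      intro x _
      induction x using TensorProduct.induction_on with
      | zero => exact Submodule.zero_mem _
      | add x y hx hy => exact Submodule.add_mem _ (hx trivial) (hy trivial)
      | tmul k a =>
        have : k ⊗ₜ[R] a = k • (1 ⊗ₜ[R] a) := by rw [TensorProduct.smul_tmul', smul_eq_mul, mul_one]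
        rw [this]
        exact Submodule.smul_mem _ _ (Submodule.subset_span ⟨a, rfl⟩)
    rw [h1, ← LinearEquiv.coe_toLinearMap, Submodule.span_image, h2, Submodule.map_top,
      LinearEquiv.range]

lemma HasDet.exists [Module.Finite R A] [Module.IsTorsionFree R A] : ∃ c, HasDet hCl A c := by
  obtain ⟨r, f, hf⟩ := exists_lattice (R := R) (A := A)
  exact ⟨_, r, f, hf, rfl⟩

variable {hCl}

lemma HasDet.unique [Module.Finite R A] {c d : Cl} (hc : HasDet hCl A c) (hd : HasDet hCl A d) :
    c = d := by
  obtain ⟨r, f, hf, rfl⟩ := hc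
  obtain ⟨s, g, hg, rfl⟩ := hd
  have h1 := isLocalizedModule_of_span f hf.inj hf.span_eq
  have h2 := isLocalizedModule_of_span g hg.inj hg.span_eq
  have hrs : r = s := by
    have := (LinearEquiv.extendScalarsOfIsLocalization (nonZeroDivisors R) (FractionRing R)
      (IsLocalizedModule.linearEquiv (nonZeroDivisors R) f g)).finrank_eq
    simpa using this
  subst hrs
  obtain ⟨u, hu, h⟩ := detIdeal_unique hf hg
  have hu' : IsFracIdeal (R ∙ u) := ⟨by simpa using hu, u, le_rfl⟩
  rw [h, idealClass_mul hCl hu' (detIdeal_isFracIdeal hf), idealClass_span hCl hu, zero_add]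

lemma HasDet.congr {c : Cl} (hc : HasDet hCl A c) (e : A ≃ₗ[R] B) : HasDet hCl B c := by
  obtain ⟨r, f, hf, rfl⟩ := hc
  have hr : Set.range (f ∘ₗ e.symm.toLinearMap) = Set.range f := by
    rw [LinearMap.coe_comp]; exact e.symm.surjective.range_comp f
  refine ⟨r, f ∘ₗ e.symm.toLinearMap, ⟨hf.inj.comp e.symm.injective, ?_⟩, ?_⟩
  · rw [hr, hf.span_eq]
  · congr 1
    unfold detIdeal
    congr 1
    ext x
    constructor
    · rintro ⟨a, rfl⟩; exact ⟨fun i => e.symm (a i), rfl⟩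
    · rintro ⟨a, rfl⟩; exact ⟨fun i => e (a i), by simp⟩

/-- The determinant class is additive on short exact sequences. -/
lemma HasDet.ses [Module.Finite R A] [Module.Finite R C] {a c : Cl} (ha : HasDet hCl A a)
    (hc : HasDet hCl C c) (i : A →ₗ[R] B) (hi : Function.Injective i) (p : B →ₗ[R] C)
    (hp : Function.Surjective p) (hex : Function.Exact i p) : HasDet hCl B (a + c) := by
  obtain ⟨r, f, hf, rfl⟩ := ha
  obtain ⟨k, g, hg, rfl⟩ := hc
  obtain ⟨h, hh, hd⟩ := exists_detIdeal_ses i hi p hp hex hf hg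
  refine ⟨k + r, _, hh.reindex finSumFinEquiv, ?_⟩
  rw [detIdeal_reindex, ← idealClass_congr hCl hd,
    idealClass_mul hCl (detIdeal_isFracIdeal hf) (detIdeal_isFracIdeal hg)]

lemma HasDet.prod [Module.Finite R A] [Module.Finite R C] {a c : Cl} (ha : HasDet hCl A a)
    (hc : HasDet hCl C c) : HasDet hCl (A × C) (a + c) :=
  ha.ses hc (LinearMap.inl R A C) LinearMap.inl_injective (LinearMap.snd R A C)
    LinearMap.snd_surjective Function.Exact.inl_snd

lemma HasDet.zero [Subsingleton A] : HasDet hCl A (0 : Cl) := by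
  refine ⟨0, 0, ⟨Function.injective_of_subsingleton _, Subsingleton.elim _ _⟩, ?_⟩
  have : detIdeal (0 : A →ₗ[R] (Fin 0 → FractionRing R)) = 1 := by
    unfold detIdeal
    rw [Submodule.one_eq_span]
    congr 1
    ext x
    simp
  rw [this, idealClass_one]

/-- A divisorial module is its own determinant. -/
lemma HasDet.of_divisorial (hA : IsDivisorialModule R A) :
    HasDet hCl A (hCl.cl (ModuleCat.of R A)) := by
  obtain ⟨I, hI, hdI, ⟨e⟩⟩ := hA.exists_ideal
  rw [cl_eq_idealClass hCl hI hdI e]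
  refine HasDet.congr ?_ e.symm
  let f : I →ₗ[R] (Fin 1 → FractionRing R) :=
    (LinearEquiv.funUnique (Fin 1) R (FractionRing R)).symm.toLinearMap ∘ₗ I.subtype
  have hf : ∀ x j, f x j = x := fun x j => rfl
  refine ⟨1, f, ⟨?_, ?_⟩, ?_⟩
  · intro x y hxy
    exact Subtype.ext (by rw [← hf x 0, ← hf y 0, hxy])
  · have : Set.range f = (LinearEquiv.funUnique (Fin 1) (FractionRing R) (FractionRing R)).symm ''
        Set.range I.subtype := by
      rw [← Set.range_comp]; rfl
    rw [this, ← LinearEquiv.coe_toLinearMap, Submodule.span_image, span_subtype_eq_top hI.ne_bot,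
      Submodule.map_top, LinearEquiv.range]
  · congr 1
    apply le_antisymm
    · rw [detIdeal, Submodule.span_le]
      rintro _ ⟨a, rfl⟩
      simp [hf]
    · intro x hx
      have := det_mem_detIdeal f (fun _ => ⟨x, hx⟩)
      simpa [hf] using this

lemma HasDet.pi {k : ℕ} : ∀ (N : Fin k → Type u) [∀ i, AddCommGroup (N i)] [∀ i, Module R (N i)]
    [∀ i, Module.Finite R (N i)] (c : Fin k → Cl) (_ : ∀ i, HasDet hCl (N i) (c i)),
    HasDet hCl (∀ i, N i) (∑ i, c i) := by
  induction k with
  | zero =>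
    intro N _ _ _ c _
    rw [Finset.univ_eq_empty, Finset.sum_empty]
    exact HasDet.zero
  | succ k ih =>
    intro N _ _ _ c h
    rw [Fin.sum_univ_succ]
    exact ((h 0).prod (ih (fun i => N i.succ) _ (fun i => h i.succ))).congr
      (Fin.consLinearEquiv R N)

end Det

/-! ### Direct summands of sums of divisorial modules -/

section KrullSchmidt

variable {R : Type u} [CommRing R]

/-- A retract `N` of `A` splits off with complement the kernel of the retraction. -/
lemma exists_equiv_prod_ker {A N : Type*} [AddCommGroup A] [Module R A] [AddCommGroup N]
    [Module R N] (ρ : A →ₗ[R] N) (ι : N →ₗ[R] A) (h : ∀ n, ρ (ι n) = n) :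
    Nonempty ((N × LinearMap.ker ρ) ≃ₗ[R] A) := by
  refine ⟨LinearEquiv.ofBijective (LinearMap.coprod ι (LinearMap.ker ρ).subtype) ⟨?_, ?_⟩⟩
  · rw [← LinearMap.ker_eq_bot, LinearMap.ker_eq_bot']
    rintro ⟨n, z, hz⟩ h0
    simp only [LinearMap.coprod_apply, Submodule.subtype_apply] at h0
    have h1 := congrArg ρ h0
    rw [map_add, h, LinearMap.mem_ker.1 hz, add_zero, map_zero] at h1
    subst h1
    simpa using h0
  · intro a
    exact ⟨(ρ a, ⟨a - ι (ρ a), by simp [h]⟩), by simp⟩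

/-- If the first component `N → A` of the embedding of the summand `N` in `A × B` is split by `ρ`,
then the complement `P` of `N` is isomorphic to `ker ρ × B`. -/
lemma exists_ker_prod_equiv {A B N P : Type*} [AddCommGroup A] [Module R A] [AddCommGroup B]
    [Module R B] [AddCommGroup N] [Module R N] [AddCommGroup P] [Module R P]
    (E : (A × B) ≃ₗ[R] (N × P)) (ρ : A →ₗ[R] N) (h : ∀ n, ρ (E.symm (n, 0)).1 = n) :
    Nonempty ((LinearMap.ker ρ × B) ≃ₗ[R] P) := by
  let f : (LinearMap.ker ρ × B) →ₗ[R] P :=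
    LinearMap.snd R N P ∘ₗ E.toLinearMap ∘ₗ
      (LinearMap.prodMap (LinearMap.ker ρ).subtype LinearMap.id)
  have hf : ∀ x, f x = (E (x.1, x.2)).2 := fun x => rfl
  refine ⟨LinearEquiv.ofBijective f ⟨?_, ?_⟩⟩
  · rw [← LinearMap.ker_eq_bot, LinearMap.ker_eq_bot']
    rintro ⟨⟨a, ha⟩, b⟩ h0
    rw [hf] at h0
    have h1 : E (a, b) = ((E (a, b)).1, 0) := Prod.ext rfl h0
    have h2 : (a, b) = E.symm ((E (a, b)).1, 0) := by rw [← h1, E.symm_apply_apply]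
    have h3 := h (E (a, b)).1
    rw [← h2] at h3
    have h4 : (E (a, b)).1 = 0 := h3.symm.trans ha
    rw [h4] at h2
    have h5 : (a, b) = 0 := h2.trans (map_zero E.symm)
    obtain ⟨rfl, rfl⟩ := Prod.mk.inj h5
    rfl
  · intro p
    let z := E.symm (0, p)
    let z' := z - E.symm (ρ z.1, 0)
    have hz' : E z' = (-ρ z.1, p) := by simp [z', z, map_sub]
    refine ⟨(⟨z'.1, ?_⟩, z'.2), ?_⟩
    · rw [LinearMap.mem_ker]
      simp only [z', Prod.fst_sub, map_sub, h, sub_self]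
    · rw [hf]; exact congrArg Prod.snd hz'

variable [IsDomain R] [IsNoetherianRing R] [IsIntegrallyClosed R]

lemma IsDivisorialModule.nontrivial {N : Type u} [AddCommGroup N] [Module R N]
    (h : IsDivisorialModule R N) : Nontrivial N := by
  by_contra hN
  rw [not_nontrivial_iff_subsingleton] at hN
  have : Subsingleton (FractionRing R ⊗[R] N) := inferInstance
  have h3 := h.2.2
  rw [HasRankOne, Module.finrank_zero_of_subsingleton] at h3
  exact zero_ne_one h3

lemma IsDivisorialModule.torsionFree {N : Type u} [AddCommGroup N] [Module R N]
    (h : IsDivisorialModule R N) : Module.IsTorsionFree R N := by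
  have := h.2.1
  infer_instance

variable [IsLocalRing R]

/-- Krull–Schmidt property: direct summands of finite sums of divisorial modules over a local
normal domain are again such sums. No completeness is needed, as endomorphism rings of divisorial
modules are equal to `R`. -/
lemma krullSchmidt {k : ℕ} : ∀ (N : Fin k → Type u) [∀ i, AddCommGroup (N i)]
    [∀ i, Module R (N i)] (_ : ∀ i, IsDivisorialModule R (N i)) (A B : Type u) [AddCommGroup A]
    [Module R A] [AddCommGroup B] [Module R B] (_ : (A × B) ≃ₗ[R] (∀ i, N i)),
    (∃ (m : ℕ) (s : Fin m → Fin k), Nonempty (A ≃ₗ[R] ∀ j, N (s j))) ∧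
    (∃ (m : ℕ) (s : Fin m → Fin k), Nonempty (B ≃ₗ[R] ∀ j, N (s j))) := by
  induction k with
  | zero =>
    intro N _ _ _ A B _ _ _ _ e
    have hs : Subsingleton (A × B) := e.toEquiv.subsingleton
    have hA : Subsingleton A := ⟨fun a b => (Prod.mk.inj (hs.elim (a, 0) (b, 0))).1⟩
    have hB : Subsingleton B := ⟨fun a b => (Prod.mk.inj (hs.elim (0, a) (0, b))).2⟩
    exact ⟨⟨0, Fin.elim0, ⟨LinearEquiv.ofSubsingleton _ _⟩⟩,
      ⟨0, Fin.elim0, ⟨LinearEquiv.ofSubsingleton _ _⟩⟩⟩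
  | succ k ih =>
    intro N _ _ hN A B _ _ _ _ e
    -- The component of `id` on `N 0` factoring through the first factor is invertible here.
    have main : ∀ (A B : Type u) [AddCommGroup A] [Module R A] [AddCommGroup B] [Module R B]
        (E : (A × B) ≃ₗ[R] (N 0 × ∀ i : Fin k, N i.succ)) (r : R) (_ : IsUnit r)
        (_ : ∀ x, (E ((E.symm (x, 0)).1, 0)).1 = r • x),
        (∃ (m : ℕ) (s : Fin m → Fin (k + 1)), Nonempty (A ≃ₗ[R] ∀ j, N (s j))) ∧
        (∃ (m : ℕ) (s : Fin m → Fin (k + 1)), Nonempty (B ≃ₗ[R] ∀ j, N (s j))) := by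
      intro A B _ _ _ _ E r hr hE
      obtain ⟨u, rfl⟩ := hr
      let ρ : A →ₗ[R] N 0 := ((u⁻¹ : Rˣ) : R) • (LinearMap.fst R _ _ ∘ₗ E.toLinearMap ∘ₗ
        LinearMap.inl R A B)
      let ι : N 0 →ₗ[R] A := LinearMap.fst R _ _ ∘ₗ E.symm.toLinearMap ∘ₗ LinearMap.inl R _ _
      have hι : ∀ x, ι x = (E.symm (x, 0)).1 := fun x => rfl
      have hρ : ∀ x, ρ x = ((u⁻¹ : Rˣ) : R) • (E (x, 0)).1 := fun x => rfl
      have h1 : ∀ x, ρ (ι x) = x := by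
        intro x
        rw [hρ, hι, hE, smul_smul, Units.inv_mul, one_smul]
      obtain ⟨e1⟩ := exists_equiv_prod_ker ρ ι h1
      obtain ⟨e2⟩ := exists_ker_prod_equiv E ρ h1
      obtain ⟨⟨m, s, ⟨eA⟩⟩, ⟨m', s', ⟨eB⟩⟩⟩ := ih (fun i => N i.succ) (fun i => hN i.succ) _ _ e2
      let s1 : Fin (m + 1) → Fin (k + 1) := Fin.cons 0 (fun j => (s j).succ)
      let e3 : (N 0 × LinearMap.ker ρ) ≃ₗ[R] (N 0 × ∀ j, N (s j).succ) :=
        LinearEquiv.prodCongr (LinearEquiv.refl R (N 0)) eA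
      let e4 : (N 0 × ∀ j, N (s j).succ) ≃ₗ[R] (∀ j, N (s1 j)) :=
        Fin.consLinearEquiv R (fun j => N (s1 j))
      exact ⟨⟨m + 1, s1, ⟨(e1.symm.trans e3).trans e4⟩⟩, ⟨m', fun j => (s' j).succ, ⟨eB⟩⟩⟩
    -- The endomorphism `id` of `N 0` is the sum of its components `r` and `t` through `A` and `B`,
    -- and one of these is a unit because `R` is local.
    let E : (A × B) ≃ₗ[R] (N 0 × ∀ i : Fin k, N i.succ) :=
      e.trans (Fin.consLinearEquiv R N).symm
    let ι : N 0 →ₗ[R] (A × B) := E.symm.toLinearMap ∘ₗ LinearMap.inl R _ _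
    let ρ : (A × B) →ₗ[R] N 0 := LinearMap.fst R _ _ ∘ₗ E.toLinearMap
    obtain ⟨r, hr⟩ := exists_smul_of_end (hN 0)
      (ρ ∘ₗ LinearMap.inl R A B ∘ₗ LinearMap.fst R A B ∘ₗ ι)
    obtain ⟨t, ht⟩ := exists_smul_of_end (hN 0)
      (ρ ∘ₗ LinearMap.inr R A B ∘ₗ LinearMap.snd R A B ∘ₗ ι)
    have hrt : r + t = 1 := by
      have := (hN 0).torsionFree
      have := (hN 0).nontrivial
      obtain ⟨x, hx⟩ := exists_ne (0 : N 0)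
      have h1 : (r + t) • x = x := by
        rw [add_smul, ← hr, ← ht]
        simp only [LinearMap.comp_apply, ← map_add]
        have : (LinearMap.inl R A B) ((LinearMap.fst R A B) (ι x)) +
            (LinearMap.inr R A B) ((LinearMap.snd R A B) (ι x)) = ι x := by simp
        rw [this]
        simp [ρ, ι]
      have h2 : (r + t - 1) • x = 0 := by rw [sub_smul, h1, one_smul, sub_self]
      rcases smul_eq_zero.1 h2 with h | h
      · exact sub_eq_zero.1 h
      · exact absurd h hx
    rcases IsLocalRing.isUnit_or_isUnit_of_add_one hrt with h | h
    · exact main A B E r h hr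
    · exact (main B A ((LinearEquiv.prodComm R B A).trans E) t h ht).symm

/-- A divisorial module which is isomorphic to a finite sum of divisorial modules is isomorphic to
one of them. -/
lemma exists_equiv_of_pi {m : ℕ} {N : Fin m → Type u} [∀ i, AddCommGroup (N i)]
    [∀ i, Module R (N i)] (hN : ∀ i, IsDivisorialModule R (N i)) {A : Type u} [AddCommGroup A]
    [Module R A] (hA : IsDivisorialModule R A) (e : A ≃ₗ[R] ∀ j, N j) :
    ∃ j, Nonempty (A ≃ₗ[R] N j) := by
  have := hA.torsionFree
  have hsub : ∀ i j : Fin m, i = j := by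
    intro i j
    by_contra hij
    obtain ⟨r, hr⟩ := exists_smul_of_end hA (e.symm.toLinearMap ∘ₗ LinearMap.single R N i ∘ₗ
      LinearMap.proj i ∘ₗ e.toLinearMap)
    have hr' : ∀ z : ∀ i, N i, (Pi.single i (z i) : ∀ i, N i) = r • z := by
      intro z
      have := congrArg e (hr (e.symm z))
      simpa using this
    have := (hN i).nontrivial
    have := (hN i).torsionFree
    have := (hN j).nontrivial
    have := (hN j).torsionFree
    obtain ⟨x, hx⟩ := exists_ne (0 : N i)
    obtain ⟨y, hy⟩ := exists_ne (0 : N j)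
    have h1 := congrFun (hr' (Pi.single j y : ∀ i, N i)) j
    rw [Pi.smul_apply, Pi.single_eq_same, Pi.single_eq_of_ne (Ne.symm hij)] at h1
    have hr0 : r = 0 := (smul_eq_zero.1 h1.symm).resolve_right hy
    have h2 := congrFun (hr' (Pi.single i x : ∀ i, N i)) i
    rw [hr0] at h2
    simp at h2
    exact hx h2
  have hm : Nonempty (Fin m) := by
    by_contra h
    rw [not_nonempty_iff] at h
    have := hA.nontrivial
    obtain ⟨x, hx⟩ := exists_ne (0 : A)
    exact hx (e.injective (funext fun i => h.elim i))
  obtain ⟨j⟩ := hm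
  let f : A →ₗ[R] N j := LinearMap.proj j ∘ₗ e.toLinearMap
  refine ⟨j, ⟨LinearEquiv.ofBijective f ⟨?_, ?_⟩⟩⟩
  · intro x y hxy
    refine e.injective (funext fun i => ?_)
    obtain rfl := hsub j i
    exact hxy
  · intro y
    exact ⟨e.symm (Pi.single j y), by simp [f]⟩

/-- Reindexing of copies of a finite product. -/
noncomputable def copiesEquiv (k n : ℕ) (N : Fin n → Type u) [∀ i, AddCommGroup (N i)]
    [∀ i, Module R (N i)] :
    (Fin k → ∀ i, N i) ≃ₗ[R] (∀ p : Fin (k * n), N (finProdFinEquiv.symm p).2) :=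
  LinearEquiv.ofBijective
    (LinearMap.pi fun p => LinearMap.proj (finProdFinEquiv.symm p).2 ∘ₗ
      LinearMap.proj (finProdFinEquiv.symm p).1)
    ⟨fun x y h => by
      funext a b
      have := congrFun h (finProdFinEquiv (a, b))
      simp only [LinearMap.pi_apply, LinearMap.comp_apply, LinearMap.proj_apply] at this
      rw [Equiv.symm_apply_apply] at this
      exact this,
    fun y => ⟨fun a b => cast (by rw [Equiv.symm_apply_apply]) (y (finProdFinEquiv (a, b))), by
      funext p
      simp only [LinearMap.pi_apply, LinearMap.comp_apply, LinearMap.proj_apply]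
      apply eq_of_heq
      refine (cast_heq _ _).trans ?_
      have : finProdFinEquiv ((finProdFinEquiv.symm p).1, (finProdFinEquiv.symm p).2) = p :=
        Equiv.apply_symm_apply _ _
      rw [this]⟩⟩

lemma exists_pi_of_summand {n k : ℕ} {N : Fin n → Type u} [∀ i, AddCommGroup (N i)]
    [∀ i, Module R (N i)] (hN : ∀ i, IsDivisorialModule R (N i)) {A B : Type u} [AddCommGroup A]
    [Module R A] [AddCommGroup B] [Module R B] (e : (A × B) ≃ₗ[R] (Fin k → ∀ i, N i)) :
    ∃ (m : ℕ) (s : Fin m → Fin n), Nonempty (A ≃ₗ[R] ∀ j, N (s j)) := by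
  obtain ⟨⟨m, s, h⟩, -⟩ := krullSchmidt (fun p : Fin (k * n) => N (finProdFinEquiv.symm p).2)
    (fun p => hN _) A B (e.trans (copiesEquiv k n N))
  exact ⟨m, fun j => (finProdFinEquiv.symm (s j)).2, h⟩

/-- A divisorial direct summand of a finite sum of divisorial modules is isomorphic to one of them. -/
lemma exists_equiv_of_summand {n k : ℕ} {N : Fin n → Type u} [∀ i, AddCommGroup (N i)]
    [∀ i, Module R (N i)] (hN : ∀ i, IsDivisorialModule R (N i)) {A B : Type u} [AddCommGroup A]
    [Module R A] [AddCommGroup B] [Module R B] (hA : IsDivisorialModule R A)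
    (e : (A × B) ≃ₗ[R] (Fin k → ∀ i, N i)) : ∃ i, Nonempty (A ≃ₗ[R] N i) := by
  obtain ⟨m, s, ⟨h⟩⟩ := exists_pi_of_summand hN e
  obtain ⟨j, hj⟩ := exists_equiv_of_pi (fun j => hN (s j)) hA h
  exact ⟨s j, hj⟩

end KrullSchmidt

/-! ### Comparison of the two definitions of Ext -/

section Bridge

universe w v z

/-- Vanishing of Ext defined as a left derived functor of the first variable implies vanishing of the
Ext groups of the derived category. Both are computed by a projective resolution of `X`. -/
theorem subsingleton_abelianExt_of_subsingleton_ext {A : Type w} [Ring A]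
    {C : Type v} [Category.{z} C] [Abelian C] [Linear A C] [EnoughProjectives C]
    [HasExt.{z} C] (X Y : C) (n : ℕ)
    (h : Subsingleton ↥(((Ext A C n).obj (Opposite.op X)).obj Y)) :
    Subsingleton (Abelian.Ext.{z} X Y n) := by
  let P := projectiveResolution X
  let K := P.complex.linearYonedaObj A Y
  have hz : Limits.IsZero (K.homology n) := by
    refine Limits.IsZero.of_iso ?_ (P.isoExt n Y).symm
    exact ModuleCat.isZero_of_subsingleton _
  have hex : K.ExactAt n := (HomologicalComplex.exactAt_iff_isZero_homology _ _).2 hz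
  rw [HomologicalComplex.exactAt_iff' K _ n (n+1) rfl (by simp)] at hex
  rw [ShortComplex.moduleCat_exact_iff] at hex
  refine ⟨fun a b => ?_⟩
  suffices H : ∀ a : Abelian.Ext.{z} X Y n, a = 0 by rw [H a, H b]
  intro a
  obtain ⟨f, hf, rfl⟩ := P.extMk_surjective a (n+1) rfl
  obtain ⟨g, hg⟩ := hex f (by
    change (K.d n (n+1)).hom f = 0
    rw [ChainComplex.linearYonedaObj_d]
    exact hf)
  rcases n with _ | p
  · have : f = 0 := by
      rw [← hg]
      change (K.d _ 0).hom g = 0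
      rw [K.shape _ _ (by simp)]
      rfl
    subst this
    exact P.extMk_zero _ rfl
  · rw [P.extMk_eq_zero_iff f _ rfl hf p rfl]
    change (K.d ((ComplexShape.up ℕ).prev (p+1)) (p+1)).hom g = f at hg
    revert g
    rw [show (ComplexShape.up ℕ).prev (p+1) = p by simp]
    intro g hg
    rw [ChainComplex.linearYonedaObj_d] at hg
    exact ⟨g, hg⟩

end Bridge

/-! ### Depth -/

section Depth
variable {R : Type u} [CommRing R] [hR : IsLocalRing R]

theorem IsMCM.subsingleton_ext {M : Type u} [AddCommGroup M] [Module R M] (hM : IsMCM R M)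
    {d : ℕ} (hd : ringKrullDim R = d) {i : ℕ} (hi : i < d) :
    Subsingleton (Abelian.Ext.{u} (ModuleCat.of R (IsLocalRing.ResidueField R))
      (ModuleCat.of R M) i) := by
  apply subsingleton_abelianExt_of_subsingleton_ext (A := R)
  by_contra hne
  have h1 := hM hR
  rw [hd] at h1
  have h2 : moduleDepth R hR M ≤ (i : ℕ∞) := sInf_le ⟨i, rfl, hne⟩
  have h3 : ((d : ℕ∞) : WithBot ℕ∞) ≤ ((i : ℕ∞) : WithBot ℕ∞) :=
    le_trans (by exact_mod_cast h1) (WithBot.coe_le_coe.2 h2)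
  have h4 : d ≤ i := by exact_mod_cast h3
  omega

theorem subsingleton_ext_of_equiv {K : ModuleCat.{u} R} {A B : Type u} [AddCommGroup A]
    [Module R A] [AddCommGroup B] [Module R B] (e : A ≃ₗ[R] B) (i : ℕ)
    (h : Subsingleton (Abelian.Ext.{u} K (ModuleCat.of R A) i)) :
    Subsingleton (Abelian.Ext.{u} K (ModuleCat.of R B) i) := by
  let f : ModuleCat.of R A ≅ ModuleCat.of R B := e.toModuleIso
  refine ⟨fun x y => ?_⟩
  have key : ∀ x : Abelian.Ext.{u} K (ModuleCat.of R B) i,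
      x = 0 := by
    intro x
    have : (x.comp (Abelian.Ext.mk₀ f.inv) (add_zero i)).comp (Abelian.Ext.mk₀ f.hom)
        (add_zero i) = x := by simp
    rw [← this, Subsingleton.elim (x.comp (Abelian.Ext.mk₀ f.inv) (add_zero i)) 0]
    simp
  rw [key x, key y]

theorem subsingleton_ext_prod {K : ModuleCat.{u} R} {A B : Type u} [AddCommGroup A]
    [Module R A] [AddCommGroup B] [Module R B] (i : ℕ)
    (hA : Subsingleton (Abelian.Ext.{u} K (ModuleCat.of R A) i))
    (hB : Subsingleton (Abelian.Ext.{u} K (ModuleCat.of R B) i)) :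
    Subsingleton (Abelian.Ext.{u} K (ModuleCat.of R (A × B)) i) := by
  refine ⟨fun x y => ?_⟩
  have key : ∀ x : Abelian.Ext.{u} K (ModuleCat.of R (A × B)) i, x = 0 := by
    intro x
    have h : (ModuleCat.ofHom (LinearMap.fst R A B)) ≫ ModuleCat.ofHom (LinearMap.inl R A B) +
       (ModuleCat.ofHom (LinearMap.snd R A B)) ≫ ModuleCat.ofHom (LinearMap.inr R A B)
        = 𝟙 (ModuleCat.of R (A × B)) := by
      ext x <;> simp
    have h2 : x.comp (Abelian.Ext.mk₀ (𝟙 (ModuleCat.of R (A × B)))) (add_zero i) = x := by simp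
    rw [← h2, ← h, Abelian.Ext.mk₀_add, Abelian.Ext.comp_add, ← Abelian.Ext.mk₀_comp_mk₀,
      ← Abelian.Ext.mk₀_comp_mk₀, ← Abelian.Ext.comp_assoc_of_third_deg_zero,
      ← Abelian.Ext.comp_assoc_of_third_deg_zero,
      Subsingleton.elim (x.comp (Abelian.Ext.mk₀ (ModuleCat.ofHom (LinearMap.fst R A B))) _) 0,
      Subsingleton.elim (x.comp (Abelian.Ext.mk₀ (ModuleCat.ofHom (LinearMap.snd R A B))) _) 0]
    simp
  rw [key x, key y]

theorem subsingleton_ext_pi {K : ModuleCat.{u} R} (i : ℕ) : ∀ {k : ℕ} (N : Fin k → Type u)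
    [∀ j, AddCommGroup (N j)] [∀ j, Module R (N j)]
    (_ : ∀ j, Subsingleton (Abelian.Ext.{u} K (ModuleCat.of R (N j)) i)),
    Subsingleton (Abelian.Ext.{u} K (ModuleCat.of R (∀ j, N j)) i)
  | 0, N, _, _, _ => by
    have : Limits.IsZero (ModuleCat.of R (∀ j, N j)) := ModuleCat.isZero_of_subsingleton _
    refine ⟨fun x y => ?_⟩
    have key : ∀ x : Abelian.Ext.{u} K (ModuleCat.of R (∀ j, N j)) i, x = 0 := fun x => by
      have h2 : x.comp (Abelian.Ext.mk₀ (𝟙 (ModuleCat.of R (∀ j, N j)))) (add_zero i) = x := by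
        simp
      rw [← h2, this.eq_zero_of_src (𝟙 _)]
      simp
    rw [key x, key y]
  | k+1, N, _, _, h =>
    subsingleton_ext_of_equiv (Fin.consLinearEquiv R N) i
      (subsingleton_ext_prod i (h 0) (subsingleton_ext_pi i (fun j => N j.succ)
        (fun j => h j.succ)))

/-- Ext vanishing below degree `d` yields a regular sequence of length `d` (Rees). -/
theorem exists_isRegular_of_subsingleton_ext [IsNoetherianRing R] {M : Type u} [AddCommGroup M]
    [Module R M] [Module.Finite R M] [Nontrivial M] (d : ℕ)
    (h : ∀ i < d, Subsingleton (Abelian.Ext.{u} (ModuleCat.of R (IsLocalRing.ResidueField R))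
      (ModuleCat.of R M) i)) :
    ∃ rs : List R, rs.length = d ∧ (∀ r ∈ rs, r ∈ IsLocalRing.maximalIdeal R) ∧
      RingTheory.Sequence.IsRegular M rs := by
  refine ModuleCat.exists_isRegular_of_exists_subsingleton_ext (IsLocalRing.maximalIdeal R) d
    (ModuleCat.of R M) ?_ (ModuleCat.of R (IsLocalRing.ResidueField R)) ?_ h
  · rw [lt_top_iff_ne_top]
    intro h
    have := Submodule.eq_bot_of_le_smul_of_le_jacobson_bot (IsLocalRing.maximalIdeal R)
      (⊤ : Submodule R M) Module.Finite.fg_top h.ge (IsLocalRing.maximalIdeal_le_jacobson _)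
    exact top_ne_bot this
  · change Module.support R (R ⧸ IsLocalRing.maximalIdeal R) = _
    rw [Module.support_eq_zeroLocus, Ideal.annihilator_quotient]

end Depth

/-! ### Projective dimension and global dimension -/

section ProjDim

variable (Λ : Type u) [Ring Λ]

/-- The projective dimension of the `Λ`-module `X` is less than `n`. -/
def PdLT (X : Type u) [AddCommGroup X] [Module Λ X] (n : ℕ) : Prop :=
  HasProjectiveDimensionLT (ModuleCat.of Λ X) n

variable {Λ} {X Y Z : Type u} [AddCommGroup X] [Module Λ X] [AddCommGroup Y] [Module Λ Y]
  [AddCommGroup Z] [Module Λ Z]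

theorem PdLT.of_equiv {n : ℕ} (h : PdLT Λ X n) (e : X ≃ₗ[Λ] Y) : PdLT Λ Y n := by
  have : HasProjectiveDimensionLT (ModuleCat.of Λ X) n := h
  exact hasProjectiveDimensionLT_of_iso e.toModuleIso n

theorem PdLT.of_le {m n : ℕ} (h : PdLT Λ X m) (hmn : m ≤ n) : PdLT Λ X n := by
  have : HasProjectiveDimensionLT (ModuleCat.of Λ X) m := h
  exact hasProjectiveDimensionLT_of_ge _ m n hmn

theorem pdLT_one_iff : PdLT Λ X 1 ↔ Module.Projective Λ X := by
  rw [PdLT, ← projective_iff_hasProjectiveDimensionLT_one, ← IsProjective.iff_projective]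

theorem PdLT.of_projective [Module.Projective Λ X] {n : ℕ} : PdLT Λ X (n + 1) :=
  (pdLT_one_iff.2 inferInstance).of_le (by omega)

theorem PdLT.of_subsingleton [Subsingleton X] {n : ℕ} : PdLT Λ X n :=
  PdLT.of_le (m := 0) ((ModuleCat.isZero_of_subsingleton
    (ModuleCat.of Λ X)).hasProjectiveDimensionLT_zero) (Nat.zero_le _)

theorem shortExact_of (f : X →ₗ[Λ] Y) (g : Y →ₗ[Λ] Z) (hf : Function.Injective f)
    (hg : Function.Surjective g) (h : Function.Exact f g) :
    (ModuleCat.shortComplexOfCompEqZero f g h.linearMap_comp_eq_zero).ShortExact :=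
  ModuleCat.shortComplex_shortExact _ h hf hg

theorem PdLT.left (f : X →ₗ[Λ] Y) (g : Y →ₗ[Λ] Z) (hf : Function.Injective f)
    (hg : Function.Surjective g) (h : Function.Exact f g) {n : ℕ} (hY : PdLT Λ Y n)
    (hZ : PdLT Λ Z (n + 1)) : PdLT Λ X n :=
  (shortExact_of f g hf hg h).hasProjectiveDimensionLT_X₁ n hY hZ

theorem PdLT.right (f : X →ₗ[Λ] Y) (g : Y →ₗ[Λ] Z) (hf : Function.Injective f)
    (hg : Function.Surjective g) (h : Function.Exact f g) {n : ℕ} (hX : PdLT Λ X n)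
    (hY : PdLT Λ Y (n + 1)) : PdLT Λ Z (n + 1) :=
  (shortExact_of f g hf hg h).hasProjectiveDimensionLT_X₃ n hX hY

theorem PdLT.ker (g : Y →ₗ[Λ] Z) (hg : Function.Surjective g) [Module.Projective Λ Y] {n : ℕ}
    (hZ : PdLT Λ Z (n + 2)) : PdLT Λ (LinearMap.ker g) (n + 1) :=
  PdLT.left (LinearMap.ker g).subtype g (Submodule.subtype_injective _) hg
    (LinearMap.exact_subtype_ker_map g) PdLT.of_projective hZ

/-- The projective dimension of every module is bounded by the global dimension. -/
theorem GlobalDimLE.pdLT {d : ℕ} (h : GlobalDimLE Λ d) (X : Type u) [AddCommGroup X]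
    [Module Λ X] : PdLT Λ X (d + 1) := by
  have key : ∀ (j : ℕ) (A B : ModuleCat.{u} Λ),
      Subsingleton (Abelian.Ext.{u} A B (d + 1 + j)) := by
    intro j
    induction j with
    | zero =>
      intro A B
      exact subsingleton_abelianExt_of_subsingleton_ext (A := ℤ) A B (d + 1) (h A B)
    | succ j ih =>
      intro A B
      have hS := A.shortExact_projectiveShortComplex
      have : Projective A.projectiveShortComplex.X₂ := by
        rw [← IsProjective.iff_projective]
        infer_instance
      have h0 : ∀ x : Abelian.Ext.{u} A B (d + 1 + (j + 1)), x = 0 := fun x => by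
        obtain ⟨x₁, hx⟩ := Abelian.Ext.contravariant_sequence_exact₃ hS B x
          (Abelian.Ext.eq_zero_of_projective (n := d + 1 + j) _) (add_comm 1 (d + 1 + j))
        have := ih A.projectiveShortComplex.X₁ B
        rw [← hx, Subsingleton.elim x₁ 0, Abelian.Ext.comp_zero]
      exact ⟨fun x y => by rw [h0 x, h0 y]⟩
  refine HasProjectiveDimensionLT.mk fun i hi B e => ?_
  obtain ⟨j, rfl⟩ := Nat.exists_eq_add_of_le hi
  have := key j (ModuleCat.of Λ X) B
  exact Subsingleton.elim e 0

/-- The bound on projective dimensions is transported along a ring isomorphism. -/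
theorem PdLT.of_ringEquiv {Γ : Type u} [Ring Γ] (e : Γ ≃+* Λ)
    {d : ℕ} (h : GlobalDimLE Γ d) (X : Type u) [AddCommGroup X] [Module Λ X] :
    PdLT Λ X (d + 1) := by
  let : Module Γ X := Module.compHom X e.toRingHom
  let := RingHomInvPair.of_ringEquiv e
  let := RingHomInvPair.of_ringEquiv e.symm
  have h1 : PdLT Γ X (d + 1) := h.pdLT X
  let e' : ModuleCat.of Γ X ≃ₛₗ[RingHomClass.toRingHom e] ModuleCat.of Λ X :=
    { AddEquiv.refl X with map_smul' := fun r x => rfl }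
  have : HasProjectiveDimensionLE (ModuleCat.of Γ X) d := h1
  exact ModuleCat.hasProjectiveDimensionLE_of_semiLinearEquiv e e' d

end ProjDim

/-! ### Reduction modulo a regular element -/

section Regular

variable {R : Type u} [CommRing R] {Λ : Type u} [Ring Λ] [Algebra R Λ]

section
variable (Λ) (x : R) (X : Type u) [AddCommGroup X] [Module Λ X] [Module R X] [IsScalarTower R Λ X]

/-- Multiplication by `x ∈ R` as a `Λ`-linear endomorphism of `X`. -/
def smulEnd : X →ₗ[Λ] X := DistribSMul.toLinearMap Λ X x

@[simp] theorem smulEnd_apply (y : X) : smulEnd Λ x X y = x • y := rfl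

/-- The `Λ`-module `X / xX`. -/
abbrev ModSmul : Type u := X ⧸ LinearMap.range (smulEnd Λ x X)

variable {Λ X} in
theorem modSmul_mk_eq_zero {y : X} :
    (LinearMap.range (smulEnd Λ x X)).mkQ y = 0 ↔ ∃ z : X, x • z = y := by
  simp

end

theorem pdLT_modSmul_of_projective (x : R) (P : Type u) [AddCommGroup P] [Module Λ P] [Module R P]
    [IsScalarTower R Λ P] [Module.Projective Λ P] (hx : ∀ y : P, x • y = 0 → y = 0) :
    PdLT Λ (ModSmul Λ x P) 2 := by
  refine PdLT.right (smulEnd Λ x P) (LinearMap.range (smulEnd Λ x P)).mkQ ?_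
    (Submodule.mkQ_surjective _) (LinearMap.exact_map_mkQ_range _) PdLT.of_projective
    PdLT.of_projective
  exact (injective_iff_map_eq_zero _).2 hx

/-- If `x` is regular on `X` and `X / xX` has projective dimension at most one, then `X` is projective.
For a surjection `π : P → X` from a free module with kernel `Ω`, the kernel `Ω' = Ω + xP` of
`P → X / xX` is projective, so the surjection `P × Ω → Ω'`, `(p, ω) ↦ x p + ω`, has a section with
first component `a`. Then `p ↦ p - a (x p)` maps `P` into `Ω`, and it restricts to `Ω` as the identity
minus a multiple of `x`, which is invertible by Nakayama's lemma. Hence `Ω` is a direct summand of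
`P`. -/
theorem projective_of_modSmul [IsLocalRing R] [IsNoetherianRing R] [Module.Finite R Λ]
    (x : R) (hx : x ∈ IsLocalRing.maximalIdeal R)
    (X : Type u) [AddCommGroup X] [Module Λ X] [Module R X] [IsScalarTower R Λ X]
    [Module.Finite Λ X] (hX : ∀ y : X, x • y = 0 → y = 0) (h : PdLT Λ (ModSmul Λ x X) 2) :
    Module.Projective Λ X := by
  obtain ⟨k, π, hπ⟩ := Module.Finite.exists_fin' Λ X
  set Ω := LinearMap.ker π with hΩ
  let q := (LinearMap.range (smulEnd Λ x X)).mkQ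
  have hπR : ∀ p, π (x • p) = x • π p := fun p => by
    rw [← algebraMap_smul Λ x p, map_smul, algebraMap_smul]
  set Ω' := LinearMap.ker (q ∘ₗ π) with hΩ'
  have memΩ' : ∀ p, p ∈ Ω' ↔ ∃ z : X, x • z = π p := fun p => by
    rw [hΩ', LinearMap.mem_ker]
    exact modSmul_mk_eq_zero (Λ := Λ) x
  have : Module.Projective Λ Ω' := pdLT_one_iff.1
    (PdLT.ker (n := 0) (q ∘ₗ π) ((Submodule.mkQ_surjective _).comp hπ) h)
  let φ : ((Fin k → Λ) × Ω) →ₗ[Λ] Ω' := LinearMap.codRestrict Ω'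
    ((smulEnd Λ x (Fin k → Λ)) ∘ₗ LinearMap.fst Λ _ _ + Ω.subtype ∘ₗ LinearMap.snd Λ _ _) (by
      rintro ⟨p, ω, hω⟩
      rw [memΩ']
      refine ⟨π p, ?_⟩
      have : π ω = 0 := hω
      simp [hπR, this])
  have hφ : Function.Surjective φ := by
    rintro ⟨p, hp⟩
    obtain ⟨z, hz⟩ := (memΩ' p).1 hp
    obtain ⟨p', rfl⟩ := hπ z
    refine ⟨(p', ⟨p - x • p', ?_⟩), ?_⟩
    · rw [hΩ, LinearMap.mem_ker, map_sub, hπR, hz, sub_self]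
    · apply Subtype.ext
      change x • p' + (p - x • p') = p
      abel
  obtain ⟨σ, hσ⟩ := Module.projective_lifting_property φ LinearMap.id hφ
  let a : Ω' →ₗ[Λ] (Fin k → Λ) := LinearMap.fst Λ _ _ ∘ₗ σ
  have hab : ∀ w : Ω', ∃ ω : Ω, x • a w + (ω : Fin k → Λ) = w := fun w =>
    ⟨(σ w).2, congrArg Subtype.val (LinearMap.congr_fun hσ w)⟩
  let mulx : (Fin k → Λ) →ₗ[Λ] Ω' := LinearMap.codRestrict Ω' (smulEnd Λ x (Fin k → Λ)) (fun p => by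
    rw [memΩ']; exact ⟨π p, (hπR p).symm⟩)
  let incl : Ω →ₗ[Λ] Ω' := Submodule.inclusion (by
    intro p hp
    rw [memΩ']
    exact ⟨0, by rw [smul_zero]; exact (LinearMap.mem_ker.1 hp).symm⟩)
  have reg : ∀ p : Fin k → Λ, x • p ∈ Ω → p ∈ Ω := fun p hp => by
    rw [hΩ, LinearMap.mem_ker, hπR] at hp
    exact hX _ hp
  let β : (Fin k → Λ) →ₗ[Λ] Ω := LinearMap.codRestrict Ω (LinearMap.id - a ∘ₗ mulx) (fun p => by
    apply reg
    obtain ⟨ω, hω⟩ := hab (mulx p)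
    have h2 : x • a (mulx p) + (ω : Fin k → Λ) = x • p := hω
    have : x • (LinearMap.id - a ∘ₗ mulx : (Fin k → Λ) →ₗ[Λ] (Fin k → Λ)) p = ω := by
      simp only [LinearMap.sub_apply, LinearMap.id_apply, LinearMap.comp_apply, smul_sub]
      rw [← h2]; abel
    rw [this]; exact ω.2)
  let α : Ω →ₗ[Λ] Ω := LinearMap.codRestrict Ω (a ∘ₗ incl) (fun p => by
    apply reg
    obtain ⟨ω, hω⟩ := hab (incl p)
    have h2 : x • a (incl p) + (ω : Fin k → Λ) = p := hω
    have : x • (a ∘ₗ incl) p = p - ω := by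
      rw [← h2]; simp
    rw [this]; exact Ω.sub_mem p.2 ω.2)
  have hβα : ∀ ω : Ω, β (ω : Fin k → Λ) = ω - x • α ω := fun ω => by
    apply Subtype.ext
    change (ω : Fin k → Λ) - a (mulx ω) = ω - x • a (incl ω)
    congr 1
    have : mulx ω = (algebraMap R Λ x) • incl ω := by
      apply Subtype.ext
      change x • (ω : Fin k → Λ) = (algebraMap R Λ x) • (ω : Fin k → Λ)
      rw [algebraMap_smul]
    rw [this, map_smul, algebraMap_smul]
  have : IsNoetherian R (Fin k → Λ) := inferInstance
  have : IsNoetherian R Ω := isNoetherian_submodule' (Ω.restrictScalars R)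
  let θ : Ω →ₗ[Λ] Ω := β ∘ₗ Ω.subtype
  have hθs : Function.Surjective θ := by
    have : (⊤ : Submodule R Ω) ≤ LinearMap.range (θ.restrictScalars R) := by
      refine Submodule.le_of_le_smul_of_le_jacobson_bot (I := IsLocalRing.maximalIdeal R)
        (IsNoetherian.noetherian _) (IsLocalRing.maximalIdeal_le_jacobson _) ?_
      intro ω _
      have : ω = θ ω + x • α ω := by
        change ω = β (ω : Fin k → Λ) + x • α ω
        rw [hβα]; abel
      rw [this]
      exact Submodule.add_mem_sup ⟨ω, rfl⟩ (Submodule.smul_mem_smul hx trivial)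
    intro ω
    obtain ⟨y, hy⟩ := this (x := ω) trivial
    exact ⟨y, hy⟩
  have hθi : Function.Injective θ :=
    IsNoetherian.injective_of_surjective_endomorphism (θ.restrictScalars R) hθs
  let θe := LinearEquiv.ofBijective θ ⟨hθi, hθs⟩
  have hsplit : ∃ l, π ∘ₗ l = LinearMap.id :=
    (((LinearMap.exact_subtype_ker_map π).split_tfae'.out 1 0 :
      (Function.Surjective π ∧ ∃ l, l ∘ₗ Ω.subtype = LinearMap.id) ↔
      (Function.Injective Ω.subtype ∧ ∃ l, π ∘ₗ l = LinearMap.id)).1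
      ⟨hπ, θe.symm.toLinearMap ∘ₗ β, by
        ext1 ω
        exact θe.symm_apply_apply ω⟩).2
  obtain ⟨l, hl⟩ := hsplit
  exact Module.Projective.of_split l π hl

/-- The projective dimension of `X` is at most that of `X / xX` minus one, for `x` regular on `X` and `Λ`
(with `e + 1` as the bound for that of `X / xX`). -/
theorem pdLT_of_modSmul [IsLocalRing R] [IsNoetherianRing R] [Module.Finite R Λ]
    (x : R) (hx : x ∈ IsLocalRing.maximalIdeal R) (hΛ : ∀ y : Λ, x • y = 0 → y = 0) (e : ℕ) :
    ∀ (X : Type u) [AddCommGroup X] [Module Λ X] [Module R X] [IsScalarTower R Λ X]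
    [Module.Finite Λ X] (_ : ∀ y : X, x • y = 0 → y = 0) (_ : PdLT Λ (ModSmul Λ x X) (e + 2)),
    PdLT Λ X (e + 1) := by
  induction e with
  | zero =>
    intro X _ _ _ _ _ hX h
    exact pdLT_one_iff.2 (projective_of_modSmul x hx X hX h)
  | succ e ih =>
    intro X _ _ _ _ _ hX h
    obtain ⟨k, π, hπ⟩ := Module.Finite.exists_fin' Λ X
    have hπR : ∀ p, π (x • p) = x • π p := fun p => by
      rw [← algebraMap_smul Λ x p, map_smul, algebraMap_smul]
    have hP : ∀ p : Fin k → Λ, x • p = 0 → p = 0 := fun p hp =>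
      funext fun i => hΛ _ (congrFun hp i)
    let f : ModSmul Λ x (LinearMap.ker π) →ₗ[Λ] ModSmul Λ x (Fin k → Λ) :=
      Submodule.mapQ _ _ (LinearMap.ker π).subtype (by
        rintro _ ⟨y, rfl⟩
        exact ⟨y, rfl⟩)
    let g : ModSmul Λ x (Fin k → Λ) →ₗ[Λ] ModSmul Λ x X :=
      Submodule.mapQ _ _ π (by
        rintro _ ⟨y, rfl⟩
        exact ⟨π y, (hπR y).symm⟩)
    have hf : Function.Injective f := by
      refine (injective_iff_map_eq_zero _).2 fun w hw => ?_
      obtain ⟨ω, rfl⟩ := Submodule.mkQ_surjective _ w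
      obtain ⟨p, hp⟩ := (modSmul_mk_eq_zero x).1 hw
      refine (modSmul_mk_eq_zero x).2 ⟨⟨p, ?_⟩, Subtype.ext hp⟩
      refine hX _ ?_
      rw [← hπR, hp]
      exact ω.2
    have hg : Function.Surjective g := by
      intro w
      obtain ⟨y, rfl⟩ := Submodule.mkQ_surjective _ w
      obtain ⟨p, rfl⟩ := hπ y
      exact ⟨Submodule.Quotient.mk p, rfl⟩
    have hfg : Function.Exact f g := by
      intro w
      obtain ⟨p, rfl⟩ := Submodule.mkQ_surjective _ w
      constructor
      · intro h
        obtain ⟨z, hz⟩ := (modSmul_mk_eq_zero x).1 h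
        obtain ⟨p', rfl⟩ := hπ z
        refine ⟨Submodule.Quotient.mk ⟨p - x • p', ?_⟩, ?_⟩
        · rw [LinearMap.mem_ker, map_sub, hπR, hz]
          exact sub_self _
        · refine (Submodule.Quotient.eq _).2 ⟨-p', ?_⟩
          simp
      · rintro ⟨w', hw'⟩
        obtain ⟨ω, rfl⟩ := Submodule.mkQ_surjective _ w'
        rw [← hw']
        refine (modSmul_mk_eq_zero x).2 ⟨0, ?_⟩
        rw [smul_zero]
        exact ω.2.symm
    have h2 : PdLT Λ (ModSmul Λ x (LinearMap.ker π)) (e + 2) :=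
      PdLT.left f g hf hg hfg
        ((pdLT_modSmul_of_projective x (Fin k → Λ) hP).of_le (by omega)) h
    have : IsNoetherian R Λ := inferInstance
    have : IsNoetherianRing Λ := isNoetherian_of_tower R this
    have : Module.Finite Λ (LinearMap.ker π) := inferInstance
    have h3 := ih (LinearMap.ker π) (fun y hy => Subtype.ext (hP _ (congrArg Subtype.val hy))) h2
    exact PdLT.right (LinearMap.ker π).subtype π (Submodule.subtype_injective _) hπ
      (LinearMap.exact_subtype_ker_map π) h3 PdLT.of_projective

end Regular

/-! ### Maximal Cohen–Macaulay modules over non-singular orders -/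

section MCMProjective

variable {R : Type u} [CommRing R] {Λ : Type u} [Ring Λ] [Algebra R Λ]

theorem isWeaklyRegular_modSmul (x : R) (X : Type u) [AddCommGroup X] [Module Λ X] [Module R X]
    [IsScalarTower R Λ X] {rs : List R}
    (h : RingTheory.Sequence.IsWeaklyRegular (QuotSMulTop x X) rs) :
    RingTheory.Sequence.IsWeaklyRegular (ModSmul Λ x X) rs := by
  let e : QuotSMulTop x X ≃ₗ[R] ModSmul Λ x X :=
    (Submodule.quotEquivOfEq _ _ (by
      ext y
      rw [Submodule.mem_smul_pointwise_iff_exists]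
      constructor
      · rintro ⟨z, -, rfl⟩
        exact ⟨z, rfl⟩
      · rintro ⟨z, rfl⟩
        exact ⟨z, trivial, rfl⟩)).trans
    (Submodule.Quotient.restrictScalarsEquiv R (LinearMap.range (smulEnd Λ x X)))
  exact (e.isWeaklyRegular_congr rs).1 h

/-- Each member of a regular sequence on `X` lowers the bound `d` on the projective dimension by one. -/
theorem pdLT_of_isWeaklyRegular [IsLocalRing R] [IsNoetherianRing R] [Module.Finite R Λ]
    (hΛ : ∀ x : R, x ≠ 0 → ∀ y : Λ, x • y = 0 → y = 0) (d : ℕ)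
    (hd : ∀ (X : Type u) [AddCommGroup X] [Module Λ X], PdLT Λ X (d + 1)) :
    ∀ (rs : List R) (_ : ∀ r ∈ rs, r ∈ IsLocalRing.maximalIdeal R) (t : ℕ)
    (_ : rs.length + t = d)
    (X : Type u) [AddCommGroup X] [Module Λ X] [Module R X] [IsScalarTower R Λ X]
    [Module.Finite Λ X] (_ : RingTheory.Sequence.IsWeaklyRegular X rs), PdLT Λ X (t + 1)
  | [], _, t, ht, X, _, _, _, _, _, _ => by
    have : t = d := by simpa using ht
    subst this
    exact hd X
  | x :: rs, hm, t, ht, X, _, _, _, _, _, h => by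
    rw [RingTheory.Sequence.isWeaklyRegular_cons_iff] at h
    have hx : ∀ y : X, x • y = 0 → y = 0 := fun y hy =>
      h.1 (by change x • y = x • (0 : X); rw [hy, smul_zero])
    by_cases h0 : x = 0
    · have : Subsingleton X := by
        refine ⟨fun a b => ?_⟩
        rw [hx a (by rw [h0, zero_smul]), hx b (by rw [h0, zero_smul])]
      exact PdLT.of_subsingleton
    · refine pdLT_of_modSmul x (hm x (by simp)) (hΛ x h0) t X hx ?_
      exact pdLT_of_isWeaklyRegular hΛ d hd rs (fun r hr => hm r (by simp [hr])) (t + 1)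
        (by simp at ht; omega) (ModSmul Λ x X) (isWeaklyRegular_modSmul x X h.2)

/-- Over a module-finite torsion-free algebra of global dimension at most `d`, a finitely
generated module of depth at least `d` over the local base ring is projective. -/
theorem projective_of_subsingleton_ext [IsLocalRing R] [IsNoetherianRing R] [Module.Finite R Λ]
    (hΛ : ∀ x : R, x ≠ 0 → ∀ y : Λ, x • y = 0 → y = 0) (d : ℕ)
    (hd : ∀ (X : Type u) [AddCommGroup X] [Module Λ X], PdLT Λ X (d + 1))
    (X : Type u) [AddCommGroup X] [Module Λ X] [Module R X] [IsScalarTower R Λ X]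
    [Module.Finite R X]
    (h : ∀ i < d, Subsingleton (Abelian.Ext.{u} (ModuleCat.of R (IsLocalRing.ResidueField R))
      (ModuleCat.of R X) i)) : Module.Projective Λ X := by
  rcases subsingleton_or_nontrivial X with hX | hX
  · infer_instance
  · obtain ⟨rs, hlen, hm, hreg⟩ := exists_isRegular_of_subsingleton_ext d h
    have : Module.Finite Λ X := Module.Finite.of_restrictScalars_finite R Λ X
    exact pdLT_one_iff.1 (pdLT_of_isWeaklyRegular hΛ d hd rs hm 0 hlen X hreg.toIsWeaklyRegular)

/-- A non-singular order has global dimension at most the Krull dimension `d` of the base ring; this is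
its defining property at the maximal ideal. -/
theorem exists_pdLT_of_isNonsingularOrder [IsLocalRing R] [IsNoetherianRing R]
    (h : IsNonsingularOrder R Λ) : ∃ d : ℕ, ringKrullDim R = d ∧
      ∀ (X : Type u) [AddCommGroup X] [Module Λ X], PdLT Λ X (d + 1) := by
  let m := IsLocalRing.maximalIdeal R
  obtain ⟨d, hd⟩ : ∃ d : ℕ, ringKrullDim R = d := by
    have ht : ringKrullDim R ≠ ⊤ := ringKrullDim_ne_top
    have hb : ringKrullDim R ≠ ⊥ := ringKrullDim_ne_bot
    obtain ⟨a, ha⟩ := WithBot.ne_bot_iff_exists.1 hb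
    rw [← ha] at ht ⊢
    have hat : a ≠ ⊤ := fun h => ht (by rw [h]; rfl)
    obtain ⟨b, hb⟩ := ENat.ne_top_iff_exists.1 hat
    exact ⟨b, by rw [← hb]; rfl⟩
  refine ⟨d, hd, ?_⟩
  have h1 := h.2.2 (IsLocalRing.closedPoint R)
  let e : R ≃ₐ[R] Localization.AtPrime m := IsLocalization.atUnits R m.primeCompl (by
    intro x hx
    exact IsLocalRing.notMem_maximalIdeal.1 hx)
  change (globalDim (Localization.AtPrime m ⊗[R] Λ) : WithBot ℕ∞) =
      ringKrullDim (Localization.AtPrime m) at h1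
  rw [← ringKrullDim_eq_of_ringEquiv e.toRingEquiv, hd] at h1
  have h2 : globalDim (Localization.AtPrime m ⊗[R] Λ) = (d : ℕ∞) := by exact_mod_cast h1
  have h3 : GlobalDimLE (Localization.AtPrime m ⊗[R] Λ) d := by
    have hne : {d : ℕ∞ | ∃ k : ℕ, d = (k : ℕ∞) ∧
        GlobalDimLE (Localization.AtPrime m ⊗[R] Λ) k}.Nonempty := by
      by_contra hne
      rw [Set.not_nonempty_iff_eq_empty] at hne
      rw [globalDim, hne, sInf_empty] at h2
      simp at h2
    obtain ⟨k, hk, hk'⟩ := csInf_mem hne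
    rw [← globalDim, h2] at hk
    have : d = k := by exact_mod_cast hk
    rwa [this]
  let e2 : Localization.AtPrime m ⊗[R] Λ ≃ₐ[R] Λ :=
    (Algebra.TensorProduct.congr e.symm AlgEquiv.refl).trans (Algebra.TensorProduct.lid R Λ)
  intro X _ _
  exact PdLT.of_ringEquiv e2.toRingEquiv h3 X

end MCMProjective

/-! ### Idempotent parts -/

section EPart

variable {R : Type u} [CommRing R] {Λ : Type u} [Ring Λ] [Algebra R Λ]

/-- For `e ∈ Λ`, the `R`-submodule of the elements of `X` fixed by `e`; it equals `eX` when `e` is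
idempotent. -/
def ePart (R : Type u) [CommRing R] {Λ : Type u} [Ring Λ] [Algebra R Λ] (e : Λ)
    (X : Type u) [AddCommGroup X] [Module Λ X] [Module R X]
    [IsScalarTower R Λ X] : Submodule R X where
  carrier := {x | e • x = x}
  add_mem' {x y} hx hy := by
    have hx' : e • x = x := hx
    have hy' : e • y = y := hy
    change e • (x + y) = x + y
    rw [smul_add, hx', hy']
  zero_mem' := smul_zero e
  smul_mem' r x hx := by
    have hx' : e • x = x := hx
    change e • r • x = r • x
    rw [smul_comm, hx']

variable {e : Λ} {X Y Z : Type u} [AddCommGroup X] [Module Λ X] [Module R X] [IsScalarTower R Λ X]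
  [AddCommGroup Y] [Module Λ Y] [Module R Y] [IsScalarTower R Λ Y]
  [AddCommGroup Z] [Module Λ Z] [Module R Z] [IsScalarTower R Λ Z]

theorem mem_ePart {x : X} : x ∈ ePart R e X ↔ e • x = x := Iff.rfl

variable (R e) in
/-- The map `eX → eY` induced by a `Λ`-linear map `X → Y`. -/
def ePartMap (f : X →ₗ[Λ] Y) : ePart R e X →ₗ[R] ePart R e Y :=
  (f.restrictScalars R).restrict (fun x hx => by
    rw [mem_ePart] at hx ⊢
    rw [LinearMap.restrictScalars_apply, ← map_smul, hx])

@[simp] theorem coe_ePartMap (f : X →ₗ[Λ] Y) (x : ePart R e X) :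
    (ePartMap R e f x : Y) = f x := rfl

theorem ePartMap_injective {f : X →ₗ[Λ] Y} (hf : Function.Injective f) :
    Function.Injective (ePartMap R e f) := fun _ _ h =>
  Subtype.ext (hf (congrArg Subtype.val h))

theorem ePartMap_surjective (he : e * e = e) {f : X →ₗ[Λ] Y} (hf : Function.Surjective f) :
    Function.Surjective (ePartMap R e f) := by
  rintro ⟨y, hy⟩
  obtain ⟨x, rfl⟩ := hf y
  refine ⟨⟨e • x, by rw [mem_ePart, smul_smul, he]⟩, Subtype.ext ?_⟩
  rw [coe_ePartMap, map_smul]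
  exact hy

theorem ePartMap_exact {f : X →ₗ[Λ] Y} {g : Y →ₗ[Λ] Z} (hf : Function.Injective f)
    (h : Function.Exact f g) : Function.Exact (ePartMap R e f) (ePartMap R e g) := by
  rintro ⟨y, hy⟩
  constructor
  · intro h0
    obtain ⟨x, rfl⟩ := (h y).1 (congrArg Subtype.val h0)
    refine ⟨⟨x, hf ?_⟩, rfl⟩
    rw [map_smul]
    exact hy
  · rintro ⟨x, hx⟩
    rw [← hx]
    exact Subtype.ext ((h _).2 ⟨x, rfl⟩)

/-- The functor `X ↦ eX` preserves finite powers. -/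
def ePartPi (k : ℕ) : ePart R e (Fin k → X) ≃ₗ[R] (Fin k → ePart R e X) where
  toFun x i := ⟨x.1 i, congrFun x.2 i⟩
  invFun y := ⟨fun i => y i, funext fun i => (y i).2⟩
  map_add' _ _ := rfl
  map_smul' _ _ := rfl
  left_inv _ := rfl
  right_inv _ := rfl

/-- If `X` is a finitely generated projective `Λ`-module, then `eX` is a direct summand of a
finite power of `eΛ`. -/
theorem exists_ePart_summand [Module.Finite Λ X] [Module.Projective Λ X]
    {D : Type u} [AddCommGroup D] [Module R D] (E : ePart R e Λ ≃ₗ[R] D) :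
    ∃ (k : ℕ) (B : ModuleCat.{u} R), Nonempty ((ePart R e X × B) ≃ₗ[R] (Fin k → D)) := by
  obtain ⟨k, π, hπ⟩ := Module.Finite.exists_fin' Λ X
  obtain ⟨s, hs⟩ := Module.projective_lifting_property π LinearMap.id hπ
  obtain ⟨F⟩ := exists_equiv_prod_ker (ePartMap R e π) (ePartMap R e s)
    (fun n => Subtype.ext (LinearMap.congr_fun hs n.1))
  exact ⟨k, ModuleCat.of R (LinearMap.ker (ePartMap R e π)),
    ⟨F.trans ((ePartPi k).trans (LinearEquiv.piCongrRight fun _ => E))⟩⟩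

variable [IsDomain R] [IsNoetherianRing R] [IsIntegrallyClosed R]
variable {Cl : Type u} [AddCommGroup Cl] {hCl : DivisorClassGroupData R Cl}

/-- If the determinant classes of `eX` lie in `S` for `X` finitely generated projective, then they lie
in `S` for every finitely generated `X` of finite projective dimension. -/
theorem det_mem_of_pdLT [Module.Finite R Λ] [Module.IsTorsionFree R Λ] (he : e * e = e)
    (S : AddSubgroup Cl)
    (hproj : ∀ (X : Type u) [AddCommGroup X] [Module Λ X] [Module R X] [IsScalarTower R Λ X]
      [Module.Finite Λ X] [Module.Projective Λ X] (c : Cl), HasDet hCl (ePart R e X) c → c ∈ S)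
    (t : ℕ) : ∀ (X : Type u) [AddCommGroup X] [Module Λ X] [Module R X] [IsScalarTower R Λ X]
      [Module.Finite Λ X] (_ : PdLT Λ X (t + 1)) (c : Cl), HasDet hCl (ePart R e X) c → c ∈ S := by
  induction t with
  | zero =>
    intro X _ _ _ _ _ h c hc
    have := pdLT_one_iff.1 h
    exact hproj X c hc
  | succ t ih =>
    intro X _ _ _ _ _ h c hc
    obtain ⟨k, π, hπ⟩ := Module.Finite.exists_fin' Λ X
    have : IsNoetherian R Λ := inferInstance
    have : IsNoetherianRing Λ := isNoetherian_of_tower R this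
    have : Module.Finite R X := Module.Finite.trans Λ X
    have : Module.Finite Λ (LinearMap.ker π) := inferInstance
    have : Module.Finite R (LinearMap.ker π) := Module.Finite.trans Λ _
    have : Module.IsTorsionFree R (LinearMap.ker π) :=
      inferInstanceAs (Module.IsTorsionFree R ((LinearMap.ker π).restrictScalars R))
    obtain ⟨z, hz⟩ := HasDet.exists hCl (A := ePart R e (LinearMap.ker π))
    obtain ⟨p, hp⟩ := HasDet.exists hCl (A := ePart R e (Fin k → Λ))
    have hzS := ih (LinearMap.ker π) (PdLT.ker π hπ h) z hz
    have hpS := hproj _ p hp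
    have hses : HasDet hCl (ePart R e (Fin k → Λ)) (z + c) :=
      hz.ses hc (ePartMap R e (LinearMap.ker π).subtype)
        (ePartMap_injective (Submodule.subtype_injective _)) (ePartMap R e π)
        (ePartMap_surjective he hπ)
        (ePartMap_exact (Submodule.subtype_injective _) (LinearMap.exact_subtype_ker_map π))
    rw [hp.unique hses] at hpS
    exact (S.add_mem_cancel_left hzS).1 hpS

end EPart

section HomPart

variable {R : Type u} [CommRing R] {M : Type u} [AddCommGroup M] [Module R M]

/-- If `e = ι ∘ ρ ∈ End_R(M)` is the projection onto a summand `R` of `M`, then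
`e Hom_R(N, M) ≃ N^*`. -/
def ePartHomEquiv (ι : R →ₗ[R] M) (ρ : M →ₗ[R] R) (h : ρ ∘ₗ ι = LinearMap.id)
    (N : Type u) [AddCommGroup N] [Module R N] :
    ePart R (ι ∘ₗ ρ : Module.End R M) (N →ₗ[R] M) ≃ₗ[R] Module.Dual R N where
  toFun f := ρ ∘ₗ f.1
  invFun g := ⟨ι ∘ₗ g, by
    rw [mem_ePart]
    ext x
    change ι (ρ (ι (g x))) = ι (g x)
    rw [show ρ (ι (g x)) = g x from LinearMap.congr_fun h (g x)]⟩
  map_add' f g := by ext x; simp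
  map_smul' r f := by ext x; simp
  left_inv f := by
    apply Subtype.ext
    ext x
    exact LinearMap.congr_fun f.2 x
  right_inv g := by
    ext x
    exact LinearMap.congr_fun h (g x)

end HomPart

/-! ### The class group of a ring with a splitting NCCR -/

section NCCR

variable {R : Type u} [CommRing R] [IsDomain R] [IsNoetherianRing R] [IsIntegrallyClosed R]
  [IsLocalRing R]
variable {Cl : Type u} [AddCommGroup Cl] (hCl : DivisorClassGroupData R Cl)
variable {m : ℕ} {M : Fin m → Type u} [∀ i, AddCommGroup (M i)] [∀ i, Module R (M i)]

/-- The dual of a finite direct sum is the direct sum of the duals. -/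
noncomputable def dualPi (M : Fin m → Type u) [∀ i, AddCommGroup (M i)] [∀ i, Module R (M i)] :
    Module.Dual R (∀ i, M i) ≃ₗ[R] ∀ i, Module.Dual R (M i) :=
  (LinearMap.lsum R M R).symm

theorem ePartEnd_equiv (ι : R →ₗ[R] ∀ i, M i) (ρ : (∀ i, M i) →ₗ[R] R)
    (h : ρ ∘ₗ ι = LinearMap.id) :
    Nonempty (ePart R (ι ∘ₗ ρ : Module.End R (∀ i, M i)) (Module.End R (∀ i, M i)) ≃ₗ[R]
      ∀ i, Module.Dual R (M i)) :=
  ⟨(ePartHomEquiv ι ρ h (∀ i, M i)).trans (dualPi M)⟩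

theorem isIdempotent_of_retract {M : Type u} [AddCommGroup M] [Module R M] (ι : R →ₗ[R] M)
    (ρ : M →ₗ[R] R) (h : ρ ∘ₗ ι = LinearMap.id) :
    (ι ∘ₗ ρ : Module.End R M) * (ι ∘ₗ ρ) = ι ∘ₗ ρ := by
  ext x
  exact congrArg ι (LinearMap.congr_fun h (ρ x))

/-- The classes of the summands of a module giving a splitting NCCR generate the class group. For a
divisorial `N`, the `End(M)`-module `Hom(N, M)` has finite projective dimension, and
`e Hom(N, M) = N^*` for the idempotent `e` projecting onto a summand `R` of `M`. For projective `X`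
the module `eX` is a sum of modules `(M i)^*`, whence the claim by additivity of determinants. -/
theorem mem_of_nonsingularOrder (hM : ∀ i, IsDivisorialModule R (M i))
    (ι : R →ₗ[R] ∀ i, M i) (ρ : (∀ i, M i) →ₗ[R] R) (h : ρ ∘ₗ ι = LinearMap.id)
    (hNS : IsNonsingularOrder R (Module.End R (∀ i, M i))) (S : AddSubgroup Cl)
    (hS : ∀ i, hCl.cl (ModuleCat.of R (M i)) ∈ S) (c : Cl) : c ∈ S := by
  obtain ⟨d, -, hd⟩ := exists_pdLT_of_isNonsingularOrder hNS
  obtain ⟨N, hN, rfl⟩ := hCl.cl_surjective c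
  have hMf : ∀ i, Module.Finite R (M i) := fun i => (hM i).1
  have hMt : ∀ i, Module.IsTorsionFree R (M i) := fun i => (hM i).torsionFree
  have hNf := hN.1
  have := hNS.1
  have hDf : ∀ i, Module.Finite R (Module.Dual R (M i)) := fun i => inferInstance
  have hdet : HasDet hCl (ePart R (ι ∘ₗ ρ : Module.End R (∀ i, M i)) (N →ₗ[R] ∀ i, M i))
      (- hCl.cl N) := by
    have h1 := divisorial_dual hCl hN
    have h2 : HasDet hCl (Module.Dual R N) (hCl.cl (ModuleCat.of R (Module.Dual R N))) :=
      HasDet.of_divisorial h1.1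
    rw [h1.2] at h2
    exact h2.congr (ePartHomEquiv ι ρ h N).symm
  have : Module.Finite (Module.End R (∀ i, M i)) (N →ₗ[R] ∀ i, M i) :=
    Module.Finite.of_restrictScalars_finite R _ _
  rw [← neg_mem_iff]
  refine det_mem_of_pdLT (isIdempotent_of_retract ι ρ h) S ?_ d _ (hd _) _ hdet
  intro X _ _ _ _ _ _ c hc
  have : Module.Finite R X := Module.Finite.trans (Module.End R (∀ i, M i)) X
  obtain ⟨E⟩ := ePartEnd_equiv ι ρ h
  obtain ⟨k, B, ⟨F⟩⟩ := exists_ePart_summand (X := X) E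
  obtain ⟨l, s, ⟨G⟩⟩ := exists_pi_of_summand (fun i => (divisorial_dual hCl (hM i)).1) F
  have h3 := (HasDet.pi (hCl := hCl) (fun j => Module.Dual R (M (s j))) _
    (fun j => HasDet.of_divisorial (divisorial_dual hCl (hM (s j))).1)).congr G.symm
  rw [hc.unique h3]
  refine S.sum_mem fun j _ => ?_
  rw [(divisorial_dual hCl (hM (s j))).2]
  exact S.neg_mem (hS _)

/-- If all divisorial modules are maximal Cohen–Macaulay, then every class is the class of a
summand of a module giving a splitting NCCR: the `End(M)`-module `Hom(N, M)` is maximal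
Cohen–Macaulay, hence projective, so that `N^*` is a summand of a sum of modules `(M i)^*`. -/
theorem exists_cl_eq_of_isMCM (hM : ∀ i, IsDivisorialModule R (M i))
    (ι : R →ₗ[R] ∀ i, M i) (ρ : (∀ i, M i) →ₗ[R] R) (h : ρ ∘ₗ ι = LinearMap.id)
    (hNS : IsNonsingularOrder R (Module.End R (∀ i, M i)))
    (hMCM : ∀ N : ModuleCat.{u} R, IsDivisorialModule R N → IsMCM R N) (c : Cl) :
    ∃ i, hCl.cl (ModuleCat.of R (M i)) = c := by
  obtain ⟨d, hdim, hd⟩ := exists_pdLT_of_isNonsingularOrder hNS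
  obtain ⟨N, hN, rfl⟩ := hCl.cl_surjective c
  have hMf : ∀ i, Module.Finite R (M i) := fun i => (hM i).1
  have hMt : ∀ i, Module.IsTorsionFree R (M i) := fun i => (hM i).torsionFree
  have hNf := hN.1
  have := hNS.1
  have hΛ : ∀ x : R, x ≠ 0 → ∀ y : Module.End R (∀ i, M i), x • y = 0 → y = 0 :=
    fun x hx y hy => (smul_eq_zero.1 hy).resolve_left hx
  have hext : ∀ i < d, Subsingleton (Abelian.Ext.{u}
      (ModuleCat.of R (IsLocalRing.ResidueField R)) (ModuleCat.of R (N →ₗ[R] ∀ i, M i)) i) := by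
    intro i hi
    refine subsingleton_ext_of_equiv
      (LinearEquiv.linearMapPi R : (∀ j, N →ₗ[R] M j) ≃ₗ[R] (N →ₗ[R] ∀ i, M i)) i ?_
    refine subsingleton_ext_pi i _ fun j => ?_
    exact (hMCM (ModuleCat.of R (N →ₗ[R] M j))
      (divisorial_hom hCl hN (hM j)).1).subsingleton_ext hdim hi
  have : Module.Projective (Module.End R (∀ i, M i)) (N →ₗ[R] ∀ i, M i) :=
    projective_of_subsingleton_ext hΛ d hd _ hext
  have : Module.Finite (Module.End R (∀ i, M i)) (N →ₗ[R] ∀ i, M i) :=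
    Module.Finite.of_restrictScalars_finite R _ _
  obtain ⟨E⟩ := ePartEnd_equiv ι ρ h
  obtain ⟨k, B, ⟨F⟩⟩ := exists_ePart_summand (X := N →ₗ[R] ∀ i, M i) E
  let F' : (Module.Dual R N × B) ≃ₗ[R] (Fin k → ∀ i, Module.Dual R (M i)) :=
    (((ePartHomEquiv ι ρ h N).symm.prodCongr (LinearEquiv.refl R B))).trans F
  obtain ⟨i, ⟨G⟩⟩ := exists_equiv_of_summand (fun i => (divisorial_dual hCl (hM i)).1)
    (divisorial_dual hCl hN).1 F'
  refine ⟨i, ?_⟩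
  have h4 := (hCl.cl_eq_iff (ModuleCat.of R (Module.Dual R N))
    (ModuleCat.of R (Module.Dual R (M i))) (divisorial_dual hCl hN).1
    (divisorial_dual hCl (hM i)).1).2 ⟨G⟩
  rw [(divisorial_dual hCl hN).2, (divisorial_dual hCl (hM i)).2] at h4
  exact (neg_injective h4).symm

end NCCR

/-! ### The group-theoretic structure -/

section Groups

variable {G : Type*} [AddCommGroup G]

theorem exists_of_mapsTo {X : Set G} (hX : X.Finite) (f : G → G) (hf : Function.Injective f)
    (h : ∀ y ∈ X, f y ∈ X) {y : G} (hy : y ∈ X) : ∃ z ∈ X, f z = y := by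
  have := Set.eq_of_subset_of_ncard_le (s := f '' X) (t := X)
    (by rintro _ ⟨z, hz, rfl⟩; exact h z hz) (Set.ncard_image_of_injective X hf).ge hX
  rw [← this] at hy
  exact hy

/-- A finite subset `X ∋ 0` of `G` such that each `x ∈ X` satisfies `X - x ⊆ X` or `X - x ⊆ -X`,
with the second alternative occurring properly, is a union `H ∪ (x₁ + H)` of two cosets of a
finite subgroup `H`. If moreover `X` generates `G` and `G` is not a torsion group unless `X = G`,
then `G = H ⊕ ℤ x₁`. -/
theorem structure_of_symmetric_subset (X : Set G) (hX : X.Finite) (h0 : (0 : G) ∈ X)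
    (h : ∀ x ∈ X, (∀ y ∈ X, y - x ∈ X) ∨ (∀ y ∈ X, x - y ∈ X))
    (x₁ : G) (hx₁ : x₁ ∈ X) (hne : ¬ ∀ y ∈ X, y - x₁ ∈ X)
    (hgen : ∀ S : AddSubgroup G, X ⊆ S → ∀ g, g ∈ S)
    (htors : (∀ g : G, IsOfFinAddOrder g) → ∀ g, g ∈ X) :
    Nonempty (G ≃+ ℤ × AddCommGroup.torsion G) ∧
      Nat.card (AddCommGroup.torsion G) = X.ncard / 2 := by
  have surj : ∀ x, (∀ y ∈ X, y - x ∈ X) → ∀ y ∈ X, y + x ∈ X := fun x hx y hy => by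
    obtain ⟨z, hz, hzy⟩ := exists_of_mapsTo hX (fun y => y - x) sub_left_injective hx hy
    rwa [← hzy, sub_add_cancel]
  -- The stabilizer of `X` under translation, which is contained in `X` because `0 ∈ X`.
  let H : AddSubgroup G :=
    { carrier := {x | x ∈ X ∧ ∀ y ∈ X, y - x ∈ X}
      zero_mem' := ⟨h0, fun y hy => by rwa [sub_zero]⟩
      add_mem' := fun {a b} ha hb => ⟨surj b hb.2 a ha.1, fun y hy => by
        rw [← sub_sub]; exact hb.2 _ (ha.2 y hy)⟩
      neg_mem' := fun {a} ha => ⟨by rw [← zero_sub]; exact ha.2 0 h0, fun y hy => by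
        rw [sub_neg_eq_add]; exact surj a ha.2 y hy⟩ }
  have memH : ∀ {x}, x ∈ H ↔ x ∈ X ∧ ∀ y ∈ X, y - x ∈ X := Iff.rfl
  have hHX : (H : Set G) ⊆ X := fun x hx => hx.1
  have hHfin : (H : Set G).Finite := hX.subset hHX
  have : Finite H := hHfin
  have hx₁H : x₁ ∉ H := fun hx => hne hx.2
  have hsub : ∀ x ∈ X, x ∉ H → x - x₁ ∈ H := by
    intro x hx hxH
    have hx' : ∀ y ∈ X, x - y ∈ X := (h x hx).resolve_left fun h => hxH ⟨hx, h⟩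
    have hx₁' : ∀ y ∈ X, x₁ - y ∈ X := (h x₁ hx₁).resolve_left hne
    refine ⟨hx' _ hx₁, fun y hy => ?_⟩
    obtain ⟨z, hz, rfl⟩ := exists_of_mapsTo hX (fun y => x - y) sub_right_injective hx' hy
    have : x - z - (x - x₁) = x₁ - z := by abel
    rw [this]
    exact hx₁' z hz
  have hXH : X = (H : Set G) ∪ (fun y => y + x₁) '' (H : Set G) := by
    ext x
    constructor
    · intro hx
      by_cases hxH : x ∈ H
      · exact Or.inl hxH
      · exact Or.inr ⟨x - x₁, hsub x hx hxH, sub_add_cancel _ _⟩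
    · rintro (hx | ⟨y, hy, rfl⟩)
      · exact hx.1
      · change y + x₁ ∈ X
        rw [add_comm]
        exact surj y hy.2 x₁ hx₁
  have hdisj : Disjoint (H : Set G) ((fun y => y + x₁) '' (H : Set G)) := by
    rw [Set.disjoint_right]
    rintro _ ⟨y, hy, rfl⟩ hyx
    exact hx₁H ((H.add_mem_cancel_left hy).1 hyx)
  have hcard : X.ncard = 2 * Nat.card H := by
    rw [hXH, Set.ncard_union_eq hdisj hHfin (hHfin.image _),
      Set.ncard_image_of_injective _ (add_left_injective x₁), ← Nat.card_coe_set_eq, two_mul]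
    rfl
  have hHtors : ∀ x ∈ H, IsOfFinAddOrder x := fun x hx => by
    have := isOfFinAddOrder_of_finite (⟨x, hx⟩ : H)
    exact H.subtype.isOfFinAddOrder this
  let ψ : ℤ × H →+ G := AddMonoidHom.coprod (zmultiplesHom G x₁) H.subtype
  have hψ : ∀ k (y : H), ψ (k, y) = k • x₁ + y := fun k y => rfl
  have hψs : Function.Surjective ψ := by
    intro g
    refine hgen ψ.range ?_ g
    intro x hx
    by_cases hxH : x ∈ H
    · exact ⟨(0, ⟨x, hxH⟩), by simp [hψ]⟩
    · exact ⟨(1, ⟨x - x₁, hsub x hx hxH⟩), by simp [hψ]⟩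
  -- If `x₁` were torsion, then so would be `G = H + ℤ x₁`, hence `X = G`, and every translate of `X`
  -- would be contained in `X`.
  have hx₁inf : ¬ IsOfFinAddOrder x₁ := by
    intro hfin
    refine hne fun y _ => htors (fun g => ?_) _
    obtain ⟨⟨k, y⟩, rfl⟩ := hψs g
    rw [hψ]
    exact (AddCommGroup.torsion G).add_mem ((AddCommGroup.torsion G).zsmul_mem hfin k)
      (hHtors y y.2)
  have hzero : ∀ k (y : H), IsOfFinAddOrder (ψ (k, y)) → k = 0 := by
    intro k y hk
    by_contra hk0
    apply hx₁inf
    have h1 : IsOfFinAddOrder (k • x₁) := by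
      have : k • x₁ = ψ (k, y) - y := by rw [hψ, add_sub_cancel_right]
      rw [this]
      exact (AddCommGroup.torsion G).sub_mem hk (hHtors y y.2)
    obtain ⟨N, hN, hN'⟩ := isOfFinAddOrder_iff_nsmul_eq_zero.1 h1
    refine isOfFinAddOrder_iff_zsmul_eq_zero.2 ⟨N * k, mul_ne_zero (by omega) hk0, ?_⟩
    rw [mul_smul, natCast_zsmul, hN']
  have hψi : Function.Injective ψ := by
    refine (injective_iff_map_eq_zero _).2 ?_
    rintro ⟨k, y⟩ hky
    have hk := hzero k y (by rw [hky]; exact IsOfFinAddOrder.zero)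
    subst hk
    rw [hψ, zero_smul, zero_add] at hky
    rw [Prod.mk_eq_zero]
    exact ⟨rfl, Subtype.ext hky⟩
  have hHT : AddCommGroup.torsion G = H := by
    ext g
    constructor
    · intro hg
      obtain ⟨⟨k, y⟩, rfl⟩ := hψs g
      have hk := hzero k y hg
      subst hk
      rw [hψ, zero_smul, zero_add]
      exact y.2
    · exact fun hg => hHtors g hg
  rw [hHT]
  exact ⟨⟨(AddEquiv.ofBijective ψ ⟨hψi, hψs⟩).symm⟩, by omega⟩

end Groups

/-! ### Semi-steadiness in terms of divisor classes -/

section Semisteady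

theorem memAdd_iff_retract {R : Type u} [CommRing R] {M N : Type u} [AddCommGroup M] [Module R M]
    [AddCommGroup N] [Module R N] :
    MemAdd R M N ↔ ∃ (k : ℕ) (ι : N →ₗ[R] Fin k → M) (ρ : (Fin k → M) →ₗ[R] N),
      ∀ x, ρ (ι x) = x := by
  constructor
  · rintro ⟨k, P, ⟨e⟩⟩
    exact ⟨k, e ∘ₗ LinearMap.inl R N P, LinearMap.fst R N P ∘ₗ e.symm, fun x => by simp⟩
  · rintro ⟨k, ι, ρ, h⟩
    exact ⟨k, ModuleCat.of R (LinearMap.ker ρ), exists_equiv_prod_ker ρ ι h⟩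

variable {R : Type u} [CommRing R] [IsDomain R] [IsNoetherianRing R] [IsIntegrallyClosed R]
  [IsLocalRing R]
variable {Cl : Type u} [AddCommGroup Cl] (hCl : DivisorClassGroupData R Cl)
variable {m : ℕ} {M : Fin m → Type u} [∀ i, AddCommGroup (M i)] [∀ i, Module R (M i)]

theorem exists_equiv_of_retract {N : Fin m → Type u} [∀ i, AddCommGroup (N i)]
    [∀ i, Module R (N i)] (hN : ∀ i, IsDivisorialModule R (N i)) {A : Type u} [AddCommGroup A]
    [Module R A] (hA : IsDivisorialModule R A) {k : ℕ} (ι : A →ₗ[R] Fin k → ∀ i, N i)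
    (ρ : (Fin k → ∀ i, N i) →ₗ[R] A) (h : ∀ x, ρ (ι x) = x) :
    ∃ i, Nonempty (A ≃ₗ[R] N i) := by
  obtain ⟨e⟩ := exists_equiv_prod_ker ρ ι h
  exact exists_equiv_of_summand hN hA e

/-- If `Hom(A, ⨁ M j) ∈ add (⨁ N j)`, then each `Hom(A, M j)` is isomorphic to some `N l`. -/
theorem exists_hom_equiv_of_memAdd {N : Fin m → Type u} [∀ i, AddCommGroup (N i)]
    [∀ i, Module R (N i)] (hN : ∀ i, IsDivisorialModule R (N i)) {A : Type u} [AddCommGroup A]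
    [Module R A] (j : Fin m) (hA : IsDivisorialModule R (A →ₗ[R] M j))
    (h : MemAdd R (∀ i, N i) (A →ₗ[R] ∀ i, M i)) :
    ∃ i, Nonempty ((A →ₗ[R] M j) ≃ₗ[R] N i) := by
  obtain ⟨k, ι, ρ, hr⟩ := memAdd_iff_retract.1 h
  refine exists_equiv_of_retract hN hA
    (ι ∘ₗ LinearMap.llcomp R A (M j) (∀ i, M i) (LinearMap.single R M j))
    (LinearMap.llcomp R A (∀ i, M i) (M j) (LinearMap.proj j) ∘ₗ ρ) fun x => ?_
  ext y
  simp [hr]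

theorem sub_mem_range_of_memAdd (hM : ∀ i, IsDivisorialModule R (M i)) (i j : Fin m)
    (h : MemAdd R (∀ j, M j) (M i →ₗ[R] ∀ j, M j)) :
    hCl.cl (ModuleCat.of R (M j)) - hCl.cl (ModuleCat.of R (M i)) ∈
      Set.range fun l => hCl.cl (ModuleCat.of R (M l)) := by
  obtain ⟨hH, hc⟩ := divisorial_hom hCl (hM i) (hM j)
  obtain ⟨l, hl⟩ := exists_hom_equiv_of_memAdd hM j hH h
  rw [← hc, (hCl.cl_eq_iff (ModuleCat.of R (M i →ₗ[R] M j)) (ModuleCat.of R (M l)) hH (hM l)).2 hl]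
  exact ⟨l, rfl⟩

theorem sub_mem_range_of_memAdd_dual (hM : ∀ i, IsDivisorialModule R (M i)) (i j : Fin m)
    (h : MemAdd R (Module.Dual R (∀ j, M j)) (M i →ₗ[R] ∀ j, M j)) :
    hCl.cl (ModuleCat.of R (M i)) - hCl.cl (ModuleCat.of R (M j)) ∈
      Set.range fun l => hCl.cl (ModuleCat.of R (M l)) := by
  obtain ⟨hH, hc⟩ := divisorial_hom hCl (hM i) (hM j)
  have h' : MemAdd R (∀ j, Module.Dual R (M j)) (M i →ₗ[R] ∀ j, M j) := by
    obtain ⟨k, P, ⟨e⟩⟩ := h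
    exact ⟨k, P, ⟨e.trans (LinearEquiv.piCongrRight fun _ => dualPi M)⟩⟩
  obtain ⟨l, hl⟩ := exists_hom_equiv_of_memAdd (fun l => (divisorial_dual hCl (hM l)).1) j hH h'
  refine ⟨l, ?_⟩
  have h1 := (hCl.cl_eq_iff (ModuleCat.of R (M i →ₗ[R] M j))
    (ModuleCat.of R (Module.Dual R (M l))) hH (divisorial_dual hCl (hM l)).1).2 hl
  rw [hc, (divisorial_dual hCl (hM l)).2] at h1
  change hCl.cl (ModuleCat.of R (M l)) = _
  rw [← neg_sub, h1, neg_neg]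

/-- If the set of classes of the `M i` is closed under differences, then every `Hom(M i, M j)` is
some `M l`, so `End(⨁ M i)` lies in `add (⨁ M i)`. -/
theorem memAdd_end (hM : ∀ i, IsDivisorialModule R (M i))
    (h : ∀ i j, ∃ l, hCl.cl (ModuleCat.of R (M l)) =
      hCl.cl (ModuleCat.of R (M j)) - hCl.cl (ModuleCat.of R (M i))) :
    MemAdd R (∀ i, M i) (Module.End R (∀ i, M i)) := by
  choose l hl using h
  have he : ∀ i j, Nonempty ((M i →ₗ[R] M j) ≃ₗ[R] M (l i j)) := fun i j => by
    obtain ⟨hH, hc⟩ := divisorial_hom hCl (hM i) (hM j)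
    exact (hCl.cl_eq_iff (ModuleCat.of R (M i →ₗ[R] M j)) (ModuleCat.of R (M (l i j))) hH
      (hM _)).1 (hc.trans (hl i j).symm)
  let e := fun i j => (he i j).some
  let E : Module.End R (∀ i, M i) ≃ₗ[R] ∀ i j, M (l i j) :=
    (LinearMap.lsum R M R).symm.trans (LinearEquiv.piCongrRight fun i =>
      (LinearEquiv.linearMapPi R).symm.trans (LinearEquiv.piCongrRight fun j => e i j))
  refine memAdd_iff_retract.2 ⟨m * m, ?_⟩
  let f : (∀ i j, M (l i j)) →ₗ[R] Fin (m * m) → ∀ i, M i := LinearMap.pi fun t =>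
    LinearMap.single R M (l (finProdFinEquiv.symm t).1 (finProdFinEquiv.symm t).2) ∘ₗ
      LinearMap.proj (finProdFinEquiv.symm t).2 ∘ₗ LinearMap.proj (finProdFinEquiv.symm t).1
  let g : (Fin (m * m) → ∀ i, M i) →ₗ[R] ∀ i j, M (l i j) := LinearMap.pi fun i =>
    LinearMap.pi fun j => LinearMap.proj (l i j) ∘ₗ LinearMap.proj (finProdFinEquiv (i, j))
  have hgf : ∀ x, g (f x) = x := fun x => by
    ext i j
    have key : ∀ p : Fin m × Fin m, p = (i, j) →
        (LinearMap.single R M (l p.1 p.2) (x p.1 p.2)) (l i j) = x i j := by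
      rintro _ rfl
      simp
    exact key _ (finProdFinEquiv.symm_apply_apply (i, j))
  exact ⟨f ∘ₗ E, E.symm ∘ₗ g, fun x => by simp [hgf]⟩

end Semisteady

/-- Let `R` be a complete Noetherian local Cohen-Macaulay normal domain
such that every rank-one reflexive `R`-module whose class in `Cl(R)` is a torsion element
is a maximal Cohen-Macaulay `R`-module. Suppose `M = ⊕_{i=0}^n M i` is a basic `R`-module
giving a semi-steady splitting NCCR of `R` that is not steady. Then `Cl(R) ≅ ℤ × A`,
where `A` is the torsion subgroup of `Cl(R)`, and the order of `A` equals `(n+1)/2`. -/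
theorem classGroup_of_semisteady_splitting_NCCR
    (R : Type u) [CommRing R] [IsNoetherianRing R] [IsDomain R] [IsIntegrallyClosed R]
    [IsLocalRing R] [IsAdicComplete (IsLocalRing.maximalIdeal R) R]
    (hCM : IsMCM R R)
    (Cl : Type u) [AddCommGroup Cl] (hCl : DivisorClassGroupData R Cl)
    (htors : ∀ N : ModuleCat.{u} R, IsDivisorialModule R ↥N →
      IsOfFinAddOrder (hCl.cl N) → IsMCM R ↥N)
    (n : ℕ) (M : Fin (n + 1) → Type u) [∀ i, AddCommGroup (M i)] [∀ i, Module R (M i)]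
    (hsplit : ∀ i, IsDivisorialModule R (M i))
    (hind : ∀ i, IsIndecomposableModule R (M i))
    (hbasic : ∀ i j, i ≠ j → ¬ Nonempty (M i ≃ₗ[R] M j))
    (hNCCR : GivesNCCR R (∀ i, M i))
    (hss : IsSemiSteadyFamily R M)
    (hnotsteady : ¬ IsSteadyModule R (∀ i, M i)) :
    Nonempty (Cl ≃+ ℤ × ↥(AddCommGroup.torsion Cl)) ∧
      Nat.card ↥(AddCommGroup.torsion Cl) = (n + 1) / 2 := by
  obtain ⟨hgen, hss⟩ := hss
  have hNS := hNCCR.2.2.2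
  obtain ⟨k, ι₀, ρ₀, h₀⟩ := memAdd_iff_retract.1 hgen
  obtain ⟨i₀, ⟨e₀⟩⟩ := exists_equiv_of_retract hsplit isDivisorialModule_self ι₀ ρ₀ h₀
  let ι : R →ₗ[R] ∀ i, M i := LinearMap.single R M i₀ ∘ₗ e₀.toLinearMap
  let ρ : (∀ i, M i) →ₗ[R] R := e₀.symm.toLinearMap ∘ₗ LinearMap.proj i₀
  have hρι : ρ ∘ₗ ι = LinearMap.id := by
    refine LinearMap.ext fun x => ?_
    simp [ρ, ι]
  let x : Fin (n + 1) → Cl := fun i => hCl.cl (ModuleCat.of R (M i))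
  have hx : Function.Injective x := fun i j hij => by
    by_contra hne
    exact hbasic i j hne
      ((hCl.cl_eq_iff (ModuleCat.of R (M i)) (ModuleCat.of R (M j)) (hsplit i) (hsplit j)).1 hij)
  have hx0 : x i₀ = 0 :=
    ((hCl.cl_eq_iff (ModuleCat.of R R) (ModuleCat.of R (M i₀)) isDivisorialModule_self
      (hsplit i₀)).2 ⟨e₀⟩).symm.trans hCl.cl_ring
  have hcard : (Set.range x).ncard = n + 1 := by
    rw [← Set.image_univ, Set.ncard_image_of_injective _ hx, Set.ncard_univ, Nat.card_eq_fintype_card,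
      Fintype.card_fin]
  obtain ⟨i₁, hi₁⟩ : ∃ i, ¬ ∀ y ∈ Set.range x, y - x i ∈ Set.range x := by
    by_contra! hall
    exact hnotsteady ⟨hgen, memAdd_end hCl hsplit fun i j => hall i _ ⟨j, rfl⟩⟩
  rw [← hcard]
  refine structure_of_symmetric_subset (Set.range x) (Set.finite_range x) ⟨i₀, hx0⟩ ?_ (x i₁)
    ⟨i₁, rfl⟩ hi₁ (fun S hS c => mem_of_nonsingularOrder hCl hsplit ι ρ hρι hNS S
      (fun i => hS ⟨i, rfl⟩) c)
    (fun hall c => exists_cl_eq_of_isMCM hCl hsplit ι ρ hρι hNS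
      (fun N hN => htors N hN (hall _)) c)
  rintro _ ⟨i, rfl⟩
  refine (hss i).imp ?_ ?_
  · rintro h _ ⟨j, rfl⟩
    exact sub_mem_range_of_memAdd hCl hsplit i j h
  · rintro h _ ⟨j, rfl⟩
    exact sub_mem_range_of_memAdd_dual hCl hsplit i j h
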